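/- arXiv:2306.07161 — 2 statements merged into one kernel-verified Lean document; each statement's English description precedes it below -/
import Mathlib

section
/- Let d ≥ 6 be an even integer and set x := 3d/2. Let C ⊂ P^2 be a smooth plane cubic and T ⊂ P^2 a smooth plane curve of degree d/2 meeting C transversally, and let S := C ∩ T be their complete intersection (a set of 3d/2 distinct points). Then S ∈ T(2,d;3d/2)'; in particular T(2,d;3d/2)' ≠ ∅ for every even d ≥ 6. -/
open MvPolynomial

noncomputable section

/-- Projective `n`-space over `k`, as the projectivization of `k^(n+1)`. -/
abbrev ProjSpace (k : Type*) [Field k] (n : ℕ) := Projectivization k (Fin (n+1) → k)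

variable (k : Type*) [Field k]

/-- Evaluation at a vector, as a linear map on polynomials. -/
def evalLM {n : ℕ} (v : Fin n → k) : MvPolynomial (Fin n) k →ₗ[k] k :=
  (MvPolynomial.aeval v).toLinearMap

/-- The submodule of polynomials vanishing together with all first partial derivatives at `v`. -/
def doubleVanishing {n : ℕ} (v : Fin n → k) : Submodule k (MvPolynomial (Fin n) k) :=
  LinearMap.ker (evalLM k v) ⊓
    ⨅ i : Fin n, LinearMap.ker ((evalLM k v).comp (MvPolynomial.pderiv i).toLinearMap)

/-- `h^0(I_{2S}(d))`: dimension of degree-`d` forms vanishing doubly at all points of `S`. -/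
def h0 (n d : ℕ) (S : Finset (ProjSpace k n)) : ℕ :=
  Module.finrank k
    ↥(homogeneousSubmodule (Fin (n+1)) k d ⊓ ⨅ p ∈ S, doubleVanishing k p.rep)

/-- `h^1(I_{2S}(d)) = h^0(I_{2S}(d)) + (n+1)#S - C(n+d,n)`. -/
def h1 (n d : ℕ) (S : Finset (ProjSpace k n)) : ℤ :=
  (h0 k n d S : ℤ) + (n+1) * S.card - (n+d).choose n

/-- `S` spans `P^n`: it is contained in no hyperplane. -/
def Spans (n : ℕ) (S : Finset (ProjSpace k n)) : Prop :=
  Submodule.span k (Projectivization.rep '' (S : Set (ProjSpace k n))) = ⊤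

/-- The Terracini locus `T(n,d;x)`. -/
def Terracini (n d x : ℕ) : Set (Finset (ProjSpace k n)) :=
  {S | S.card = x ∧ Spans k n S ∧ 0 < h0 k n d S ∧ 0 < h1 k n d S}

/-- The minimally Terracini locus `T(n,d;x)'`. -/
def minTerracini (n d x : ℕ) : Set (Finset (ProjSpace k n)) :=
  {S | S ∈ Terracini k n d x ∧ ∀ A : Finset (ProjSpace k n), A ⊂ S → h1 k n d A = 0}

end

/-- The zero locus in `P^n` of a (homogeneous) polynomial `q`. -/
def projZeroLocus (k : Type*) [Field k] (n : ℕ) (q : MvPolynomial (Fin (n+1)) k) :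
    Set (ProjSpace k n) :=
  {p | MvPolynomial.eval (Projectivization.rep p) q = 0}

/-- `q` defines a smooth plane curve of degree `e` in `P^2`: `q` is a nonzero homogeneous
form of degree `e` and at no point of its zero locus do all partial derivatives vanish. -/
def IsSmoothPlaneCurve (k : Type*) [Field k] (e : ℕ) (q : MvPolynomial (Fin 3) k) : Prop :=
  q ≠ 0 ∧ q ∈ MvPolynomial.homogeneousSubmodule (Fin 3) k e ∧
    ∀ v : Fin 3 → k, v ≠ 0 → MvPolynomial.eval v q = 0 →
      ∃ i, MvPolynomial.eval v (MvPolynomial.pderiv i q) ≠ 0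


noncomputable section CBsec

variable {k : Type*} [Field k]

/-- Restriction of a polynomial to the line `X 2 = 0`, in the affine chart `(s, 1, 0)`. -/
def resLine : MvPolynomial (Fin 3) k →ₐ[k] Polynomial k :=
  MvPolynomial.aeval ![Polynomial.X, 1, 0]

lemma resLine_monomial (s : Fin 3 →₀ ℕ) (a : k) :
    resLine (monomial s a) = Polynomial.C a * (Polynomial.X ^ (s 0) * 0 ^ (s 2)) := by
  simp [resLine, aeval_monomial, Finsupp.prod_fintype, Fin.prod_univ_three]

lemma fin3_degree (s : Fin 3 →₀ ℕ) : s.degree = s 0 + s 1 + s 2 := by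
  simp [Finsupp.degree_eq_sum, Fin.sum_univ_three]

lemma resLine_eq_sum (F : MvPolynomial (Fin 3) k) :
    resLine F = ∑ s ∈ F.support,
      Polynomial.C (coeff s F) * (Polynomial.X ^ (s 0) * 0 ^ (s 2)) := by
  conv_lhs => rw [F.as_sum]
  simp only [map_sum, resLine_monomial]

lemma resLine_natDegree_le {m : ℕ} {F : MvPolynomial (Fin 3) k} (hF : F.IsHomogeneous m) :
    (resLine F).natDegree ≤ m := by
  rw [resLine_eq_sum]
  apply Polynomial.natDegree_sum_le_of_forall_le
  intro s hs
  have h1 : s.degree = m := by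
    by_contra hne
    exact (mem_support_iff.mp hs) (hF.coeff_eq_zero hne)
  have h2 := fin3_degree s
  by_cases h0 : s 2 = 0
  · simp only [h0, pow_zero, mul_one]
    refine (Polynomial.natDegree_C_mul_X_pow_le _ _).trans ?_
    omega
  · simp [h0]

lemma resLine_coeff {m : ℕ} {F : MvPolynomial (Fin 3) k} (hF : F.IsHomogeneous m)
    (s : Fin 3 →₀ ℕ) (hs : s 2 = 0) (hd : s.degree = m) :
    (resLine F).coeff (s 0) = coeff s F := by
  rw [resLine_eq_sum, Polynomial.finsetSum_coeff]
  rw [Finset.sum_eq_single s]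
  · simp [hs]
  · intro t ht hts
    by_cases h0 : t 2 = 0
    · simp only [h0, pow_zero, mul_one, Polynomial.coeff_C_mul, Polynomial.coeff_X_pow]
      rw [if_neg, mul_zero]
      intro h
      apply hts
      have h1 : t.degree = m := by
        by_contra hne
        exact (mem_support_iff.mp ht) (hF.coeff_eq_zero hne)
      rw [fin3_degree] at h1 hd
      ext i; fin_cases i <;> simp <;> omega
    · simp [h0]
  · intro h
    simp [notMem_support_iff.mp h]

lemma resLine_ker {m : ℕ} {F : MvPolynomial (Fin 3) k} (hF : F.IsHomogeneous m)
    (h0 : resLine F = 0) : F = 0 ∨ ∃ j G, m = j + 1 ∧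
      MvPolynomial.IsHomogeneous G j ∧ F = X 2 * G := by
  have hmod : F.modMonomial (Finsupp.single 2 1) = 0 := by
    ext s
    by_cases hs : Finsupp.single 2 1 ≤ s
    · rw [coeff_modMonomial_of_le _ hs, coeff_zero]
    · rw [coeff_modMonomial_of_not_le _ hs, coeff_zero]
      have hs2 : s 2 = 0 := by
        by_contra h
        apply hs
        rw [Finsupp.single_le_iff]; omega
      by_cases hd : s.degree = m
      · rw [← resLine_coeff hF s hs2 hd, h0, Polynomial.coeff_zero]
      · exact hF.coeff_eq_zero hd
  have hdec := divMonomial_add_modMonomial_single F (2 : Fin 3)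
  rw [hmod, add_zero] at hdec
  rcases m with _ | j
  · left
    rw [← hdec]
    have : F.divMonomial (Finsupp.single 2 1) = 0 := by
      ext s
      rw [coeff_divMonomial, coeff_zero]
      apply hF.coeff_eq_zero
      rw [fin3_degree]; simp
    rw [this, mul_zero]
  · right
    refine ⟨j, F.divMonomial (Finsupp.single 2 1), rfl, ?_, hdec.symm⟩
    intro s hs
    rw [coeff_divMonomial] at hs
    have := hF hs
    rw [map_add] at this
    simp [Finsupp.weight_single] at this
    omega

lemma resLine_lift (m : ℕ) (h : Polynomial k) (hm : h.natDegree ≤ m) :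
    ∃ F : MvPolynomial (Fin 3) k, F.IsHomogeneous m ∧ resLine F = h := by
  refine ⟨∑ j ∈ Finset.range (m+1), C (h.coeff j) * (X 0 ^ j * X 1 ^ (m - j)), ?_, ?_⟩
  · apply IsHomogeneous.sum
    intro j hj
    apply IsHomogeneous.C_mul
    have := (isHomogeneous_X_pow (R := k) (0 : Fin 3) j).mul (isHomogeneous_X_pow (1 : Fin 3) (m - j))
    rwa [Nat.add_sub_cancel' (by simpa [Nat.lt_succ_iff] using hj)] at this
  · simp only [map_sum, map_mul, map_pow]
    conv_rhs => rw [h.as_sum_range_C_mul_X_pow' (n := m+1) (by omega)]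
    apply Finset.sum_congr rfl
    intro j _
    simp [resLine]

/-- If the restriction of `u` lies in the ideal of the restrictions of `c, g` with good degrees,
then on the common zeros with `X 2 = 1`, `u` agrees with a form of lower degree. -/
lemma reduce {e i : ℕ} {c g u : MvPolynomial (Fin 3) k}
    (hc : c.IsHomogeneous 3) (hg : g.IsHomogeneous e) (hu : u.IsHomogeneous i)
    (hc3 : (resLine c).natDegree = 3)
    (r : Polynomial k) (hr : r = 0 ∨ e ≤ i ∧ r.natDegree ≤ i - e)
    (hdvd : resLine c ∣ resLine u - r * resLine g) :
    (∃ A B, u = A * c + B * g) ∨ ∃ j u', i = j + 1 ∧ MvPolynomial.IsHomogeneous u' j ∧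
      ∃ A B, u = A * c + B * g + X 2 * u' := by
  obtain ⟨a, ha⟩ := hdvd
  have hB : ∃ B : MvPolynomial (Fin 3) k, resLine B = r ∧ (B * g).IsHomogeneous i := by
    rcases hr with rfl | ⟨h1, h2⟩
    · exact ⟨0, by simp, by simpa using isHomogeneous_zero _ _ _⟩
    · obtain ⟨B, hB1, hB2⟩ := resLine_lift _ _ h2
      refine ⟨B, hB2, ?_⟩
      have := hB1.mul hg
      rwa [Nat.sub_add_cancel h1] at this
  obtain ⟨B, hB1, hB2⟩ := hB
  have hsub := hu.sub hB2
  have hA : ∃ A : MvPolynomial (Fin 3) k, resLine A = a ∧ (A * c).IsHomogeneous i := by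
    by_cases ha0 : a = 0
    · exact ⟨0, by simp [ha0], by simpa using isHomogeneous_zero _ _ _⟩
    · have h1 := resLine_natDegree_le hsub
      have hc0 : resLine c ≠ 0 := by
        intro h; rw [h] at hc3; simp at hc3
      rw [map_sub, map_mul, hB1, ha, Polynomial.natDegree_mul hc0 ha0, hc3] at h1
      obtain ⟨A, hA1, hA2⟩ := resLine_lift (i - 3) a (by omega)
      refine ⟨A, hA2, ?_⟩
      have := hA1.mul hc
      rwa [Nat.sub_add_cancel (by omega)] at this
  obtain ⟨A, hA1, hA2⟩ := hA
  have h0 : resLine (u - B * g - A * c) = 0 := by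
    rw [map_sub, map_sub, map_mul, map_mul, hA1, hB1, ha]; ring
  rcases resLine_ker (hsub.sub hA2) h0 with h | ⟨j, G, hj, hG, h⟩
  · left; exact ⟨A, B, by linear_combination h⟩
  · right; exact ⟨j, G, hj, hG, A, B, by linear_combination h⟩


/-- Independence of proper subsets of the complete intersection, in adapted coordinates. -/
lemma cb_adapted [IsAlgClosed k] {ι : Type*} [Fintype ι] [DecidableEq ι] {e : ℕ}
    {c g : MvPolynomial (Fin 3) k}
    (hc : c.IsHomogeneous 3) (hg : g.IsHomogeneous e)
    (hc3 : (resLine c).natDegree = 3)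
    (hno : ∀ s : k, ¬ (eval ![s, 1, 0] c = 0 ∧ eval ![s, 1, 0] g = 0))
    (v : ι → Fin 3 → k) (hv2 : ∀ i, v i 2 = 1) (hinj : Function.Injective v)
    (hvc : ∀ i, eval (v i) c = 0) (hvg : ∀ i, eval (v i) g = 0)
    (b : ι → k) (hb : ∀ F : MvPolynomial (Fin 3) k, F.IsHomogeneous e →
      ∑ i, b i * eval (v i) F = 0)
    (p : ι) (hp : b p = 0) : b = 0 := by
  have hcop : IsCoprime (resLine c) (resLine g) := by
    rw [Polynomial.isCoprime_iff_aeval_ne_zero_of_isAlgClosed k k]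
    intro s
    have key : ∀ F : MvPolynomial (Fin 3) k,
        Polynomial.aeval s (resLine F) = eval ![s, 1, 0] F := by
      intro F
      induction F using MvPolynomial.induction_on with
      | C a => simp [resLine]
      | add p q hp hq => simp only [map_add, hp, hq]
      | mul_X p i hp =>
        simp only [map_mul, hp]
        fin_cases i <;> simp [resLine]
    rw [key, key]
    have := hno s
    tauto
  have hc0 : resLine c ≠ 0 := by
    intro h; rw [h] at hc3; simp at hc3
  obtain ⟨a0, w, haw⟩ := hcop
  -- the relation: r represents F over g modulo c
  have ex : ∀ F : MvPolynomial (Fin 3) k, ∃ r : Polynomial k, r.natDegree ≤ 2 ∧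
      resLine c ∣ resLine F - r * resLine g := by
    intro F
    refine ⟨(resLine F * w) % resLine c, ?_, ?_⟩
    · have := Polynomial.natDegree_mod_lt (resLine F * w) (q := resLine c) (by omega)
      omega
    · have := EuclideanDomain.mod_add_div (resLine F * w) (resLine c)
      refine ⟨resLine F * a0 + (resLine F * w / resLine c) * resLine g, ?_⟩
      linear_combination (-resLine F) * haw - resLine g * this
  set L : MvPolynomial (Fin 3) k → k := fun F => ∑ i, b i * eval (v i) F with hL
  have Lred : ∀ A B u : MvPolynomial (Fin 3) k, L (A * c + B * g + X 2 * u) = L u := by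
    intro A B u
    simp [hL, hvc, hvg, hv2]
  have Lred0 : ∀ A B : MvPolynomial (Fin 3) k, L (A * c + B * g) = 0 := by
    intro A B
    simp [hL, hvc, hvg]
  have P1 : ∀ (F : MvPolynomial (Fin 3) k) (r : Polynomial k), F.IsHomogeneous (e+1) →
      r.natDegree ≤ 2 → resLine c ∣ resLine F - r * resLine g → r.coeff 2 = 0 → L F = 0 := by
    intro F r hF hr hdvd hr2
    have hr1 : r.natDegree ≤ 1 := by
      rw [Polynomial.natDegree_le_iff_coeff_eq_zero] at hr ⊢
      intro N hN
      rcases (show N = 2 ∨ 2 < N by omega) with rfl | h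
      · exact hr2
      · exact hr N h
    rcases reduce hc hg hF hc3 r (Or.inr ⟨by omega, by omega⟩) hdvd with
      ⟨A, B, h⟩ | ⟨j, u', hj, hu', A, B, h⟩
    · rw [h, Lred0]
    · rw [h, Lred]
      obtain rfl : e = j := by omega
      exact hb u' hu'
  have interp : ∀ q : ι, ∃ i, ∃ u : MvPolynomial (Fin 3) k, u.IsHomogeneous i ∧
      eval (v q) u ≠ 0 ∧ ∀ q', q' ≠ q → eval (v q') u = 0 := by
    intro q
    have : ∀ q' : ι, ∃ l : MvPolynomial (Fin 3) k, l.IsHomogeneous 1 ∧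
        (q' ≠ q → eval (v q') l = 0 ∧ eval (v q) l ≠ 0) := by
      intro q'
      by_cases hq : q' = q
      · exact ⟨0, isHomogeneous_zero _ _ _, fun h => absurd hq h⟩
      · have hne : v q' ≠ v q := fun h => hq (hinj h)
        obtain ⟨a, ha⟩ := Function.ne_iff.mp hne
        refine ⟨X a - C (v q' a) * X 2, (isHomogeneous_X _ _).sub (isHomogeneous_C_mul_X _ _), ?_⟩
        intro _
        simp [hv2, sub_eq_zero, ha.symm]
    choose l hl1 hl2 using this
    refine ⟨_, ∏ q' ∈ Finset.univ.erase q, l q', IsHomogeneous.prod _ _ (fun _ => 1)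
      (fun i _ => hl1 i), ?_, ?_⟩
    · rw [map_prod, Finset.prod_ne_zero_iff]
      intro q' hq'
      exact (hl2 q' (Finset.ne_of_mem_erase hq')).2
    · intro q' hq'
      rw [map_prod]
      exact Finset.prod_eq_zero (Finset.mem_erase.mpr ⟨hq', Finset.mem_univ _⟩) (hl2 q' hq').1
  by_cases hcase : ∃ F1 : MvPolynomial (Fin 3) k, F1.IsHomogeneous (e+1) ∧ L F1 ≠ 0
  · exfalso
    obtain ⟨F1, hF1, hLF1⟩ := hcase
    have P2 : ∀ (F : MvPolynomial (Fin 3) k) (r : Polynomial k), F.IsHomogeneous (e+1) →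
        r.natDegree ≤ 2 → resLine c ∣ resLine F - r * resLine g → L F = 0 → r.coeff 2 = 0 := by
      intro F r hF hr hdvd hLF
      obtain ⟨r1, hr1, hdvd1⟩ := ex F1
      have hCr : ∀ a : k, resLine (C a : MvPolynomial (Fin 3) k) = Polynomial.C a := by
        intro a; simp [resLine]
      have := P1 (C (r1.coeff 2) * F - C (r.coeff 2) * F1)
        (Polynomial.C (r1.coeff 2) * r - Polynomial.C (r.coeff 2) * r1)
        ((hF.C_mul _).sub (hF1.C_mul _)) ?_ ?_ ?_
      · have h2 : L (C (r1.coeff 2) * F - C (r.coeff 2) * F1)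
            = r1.coeff 2 * L F - r.coeff 2 * L F1 := by
          simp only [hL, map_sub, map_mul, eval_C, Finset.mul_sum, ← Finset.sum_sub_distrib]
          apply Finset.sum_congr rfl
          intros; ring
        rw [h2, hLF, mul_zero, zero_sub, neg_eq_zero] at this
        exact (mul_eq_zero.mp this).resolve_right hLF1
      · refine (Polynomial.natDegree_sub_le _ _).trans (max_le ?_ ?_)
        · exact (Polynomial.natDegree_C_mul_le _ _).trans hr
        · exact (Polynomial.natDegree_C_mul_le _ _).trans hr1
      · have h3 := (hdvd.mul_left (Polynomial.C (r1.coeff 2))).sub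
          (hdvd1.mul_left (Polynomial.C (r.coeff 2)))
        simp only [map_sub, map_mul, hCr]
        convert h3 using 1
        ring
      · simp [mul_comm]
    classical
    have hex := interp p
    obtain ⟨u, hu, hup, huq⟩ := Nat.find_spec hex
    set i := Nat.find hex with hi
    obtain ⟨r, hr, hdvd⟩ := ex u
    have hLu : ∀ V : MvPolynomial (Fin 3) k, L (u * V) = 0 := by
      intro V
      apply Finset.sum_eq_zero
      intro q _
      by_cases hq : q = p
      · rw [hq, hp, zero_mul]
      · rw [map_mul, huq q hq]; simp
    -- multiply by a monomial
    have step : ∀ a, i + a ≤ e + 1 → (Polynomial.X ^ a * r).natDegree ≤ 2 →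
        (Polynomial.X ^ a * r).coeff 2 = 0 := by
      intro a ha hdeg
      refine P2 (u * (X 0 ^ a * X 1 ^ (e + 1 - i - a))) _ ?_ hdeg ?_ (hLu _)
      · have := hu.mul ((isHomogeneous_X_pow (R := k) (0 : Fin 3) a).mul
          (isHomogeneous_X_pow (1 : Fin 3) (e + 1 - i - a)))
        rwa [show i + (a + (e + 1 - i - a)) = e + 1 by omega] at this
      · have h4 := hdvd.mul_left (Polynomial.X ^ a)
        have h5 : resLine (u * (X 0 ^ a * X 1 ^ (e + 1 - i - a)))
            = Polynomial.X ^ a * resLine u := by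
          simp [resLine, mul_comm]
        rw [h5]
        convert h4 using 1
        ring
    have lower : ∀ n, r.natDegree ≤ n + 1 → r.coeff (n+1) = 0 → r.natDegree ≤ n := by
      intro n hn h0
      rw [Polynomial.natDegree_le_iff_coeff_eq_zero] at hn ⊢
      intro N hN
      rcases (show N = n + 1 ∨ n + 1 < N by omega) with rfl | h
      · exact h0
      · exact hn N h
    have hrr : r = 0 ∨ e ≤ i ∧ r.natDegree ≤ i - e := by
      by_cases h2 : e + 2 ≤ i
      · right; exact ⟨by omega, by omega⟩
      have hr1 : r.natDegree ≤ 1 := by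
        apply lower 1 hr
        have := step 0 (by omega) (by simpa using hr)
        simpa using this
      by_cases h3 : e + 1 ≤ i
      · right; exact ⟨by omega, by omega⟩
      have hr0 : r.natDegree ≤ 0 := by
        apply lower 0 hr1
        have := step 1 (by omega) (by
          refine Polynomial.natDegree_mul_le.trans ?_
          simp; omega)
        rw [pow_one, Polynomial.coeff_X_mul] at this
        exact this
      by_cases h4 : e ≤ i
      · right; exact ⟨by omega, by omega⟩
      left
      have := step 2 (by omega) (by
          refine Polynomial.natDegree_mul_le.trans ?_
          simp; omega)
      rw [show (2 : ℕ) = 0 + 2 from rfl, Polynomial.coeff_X_pow_mul] at this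
      rw [Polynomial.eq_C_of_natDegree_le_zero hr0, this, Polynomial.C_0]
    rcases reduce hc hg hu hc3 r hrr hdvd with ⟨A, B, h⟩ | ⟨j, u', hj, hu', A, B, h⟩
    · apply hup; rw [h]; simp [hvc, hvg]
    · have hev : ∀ q, eval (v q) u = eval (v q) u' := by
        intro q; rw [h]; simp [hvc, hvg, hv2]
      have : j < i := by omega
      exact Nat.find_min hex this ⟨u', hu', by rwa [← hev], fun q hq => by rw [← hev, huq q hq]⟩
  · push Not at hcase
    have all : ∀ m, ∀ F : MvPolynomial (Fin 3) k, F.IsHomogeneous (e + 1 + m) → L F = 0 := by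
      intro m
      induction m with
      | zero => exact hcase
      | succ m ih =>
        intro F hF
        obtain ⟨r, hr, hdvd⟩ := ex F
        rcases reduce hc hg hF hc3 r (Or.inr ⟨by omega, by omega⟩) hdvd with
          ⟨A, B, h⟩ | ⟨j, u', hj, hu', A, B, h⟩
        · rw [h, Lred0]
        · rw [h, Lred]
          apply ih
          rwa [show e + 1 + m = j by omega]
    funext q
    obtain ⟨i, u, hu, huq, huq'⟩ := interp q
    have h1 := all i (u * X 2 ^ (e+1)) (by
      have := hu.mul (isHomogeneous_X_pow (R := k) (2 : Fin 3) (e+1))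
      rwa [add_comm i] at this)
    rw [hL] at h1
    simp only [map_mul, map_pow, eval_X, hv2, one_pow, mul_one] at h1
    rw [Finset.sum_eq_single q (fun q' _ h => by rw [huq' q' h, mul_zero]) (by simp)] at h1
    simpa using (mul_eq_zero.mp h1).resolve_right huq

lemma eval_smul_hom {m : ℕ} {F : MvPolynomial (Fin 3) k} (hF : F.IsHomogeneous m)
    (a : k) (v : Fin 3 → k) : eval (a • v) F = a ^ m * eval v F := by
  rw [eval_eq', eval_eq', Finset.mul_sum]
  apply Finset.sum_congr rfl
  intro s hs
  have h1 : s.degree = m := by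
    by_contra hne
    exact (mem_support_iff.mp hs) (hF.coeff_eq_zero hne)
  rw [fin3_degree] at h1
  rw [← h1]
  simp only [Fin.prod_univ_three, Pi.smul_apply, smul_eq_mul]
  ring

lemma eval_e0 {m : ℕ} {F : MvPolynomial (Fin 3) k} (hF : F.IsHomogeneous m) :
    eval (Pi.single 0 1) F = coeff (Finsupp.single 0 m) F := by
  rw [eval_eq', Finset.sum_eq_single (Finsupp.single 0 m)]
  · simp [Fin.prod_univ_three]
  · intro t ht hne
    have h1 : t.degree = m := by
      by_contra hne
      exact (mem_support_iff.mp ht) (hF.coeff_eq_zero hne)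
    rw [fin3_degree] at h1
    by_cases h : t 1 = 0 ∧ t 2 = 0
    · exfalso
      apply hne
      ext i; fin_cases i <;> simp <;> omega
    · simp [Fin.prod_univ_three]
      tauto
  · intro h
    simp [notMem_support_iff.mp h]

/-- Composition of a polynomial with a linear map. -/
def linComp (N : (Fin 3 → k) →ₗ[k] (Fin 3 → k)) (F : MvPolynomial (Fin 3) k) :
    MvPolynomial (Fin 3) k :=
  MvPolynomial.aeval (fun i => ∑ j, C (N (Pi.single j 1) i) * X j) F

lemma linComp_hom {m : ℕ} (N : (Fin 3 → k) →ₗ[k] (Fin 3 → k)) {F : MvPolynomial (Fin 3) k}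
    (hF : F.IsHomogeneous m) : (linComp N F).IsHomogeneous m := by
  have := hF.aeval (fun i => ∑ j, C (N (Pi.single j 1) i) * X j) (n := 1)
    (fun i => IsHomogeneous.sum _ _ _ fun j _ => isHomogeneous_C_mul_X _ _)
  rwa [one_mul] at this

lemma eval_linComp (N : (Fin 3 → k) →ₗ[k] (Fin 3 → k)) (F : MvPolynomial (Fin 3) k)
    (x : Fin 3 → k) : eval x (linComp N F) = eval (N x) F := by
  have hN : ∀ i, N x i = ∑ j, N (Pi.single j 1) i * x j := by
    intro i
    conv_lhs => rw [pi_eq_sum_univ' x]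
    simp [map_sum, mul_comm]
  induction F using MvPolynomial.induction_on with
  | C a => simp [linComp]
  | add p q hp hq =>
    simp only [linComp, map_add] at hp hq ⊢
    rw [hp, hq]
  | mul_X p i hp =>
    simp only [linComp, map_mul, aeval_X, map_sum, eval_C, eval_X] at hp ⊢
    rw [hp, hN]

lemma exists_adapted (w : Fin 3 → k) (hw : w ≠ 0) (l : Module.Dual k (Fin 3 → k))
    (hl : l ≠ 0) (hlw : l w = 0) :
    ∃ E : (Fin 3 → k) ≃ₗ[k] (Fin 3 → k), E w = Pi.single 0 1 ∧ ∀ x, E x 2 = l x := by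
  obtain ⟨l1, hl1⟩ : ∃ l1 : Module.Dual k (Fin 3 → k), l1 w ≠ 0 := by
    by_contra! h
    exact hw ((Module.forall_dual_apply_eq_zero_iff k w).mp h)
  obtain ⟨w3', hw3'⟩ : ∃ x, l x ≠ 0 := by
    by_contra! h
    exact hl (LinearMap.ext h)
  obtain ⟨w2, hw2, hw2'⟩ : ∃ x, x ≠ 0 ∧ (l x = 0 ∧ l1 x = 0) := by
    have h := LinearMap.ker_ne_bot_of_finrank_lt (f := l.prod l1) (by simp)
    obtain ⟨x, hx, hx0⟩ := Submodule.exists_mem_ne_zero_of_ne_bot h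
    exact ⟨x, hx0, by simpa using hx⟩
  set w3 : Fin 3 → k := (l w3')⁻¹ • (w3' - (l1 w3' / l1 w) • w) with hw3
  have h3l : l w3 = 1 := by
    simp [hw3, hlw, hw3']
  have h3l1 : l1 w3 = 0 := by
    simp [hw3, hl1]
  have hli : LinearIndependent k ![w, w2, w3] := by
    rw [Fintype.linearIndependent_iff]
    intro a ha
    simp [Fin.sum_univ_three] at ha
    have h1 := congrArg l ha
    have h2 := congrArg l1 ha
    simp [hlw, hw2'.1, hw2'.2, h3l, h3l1, hl1] at h1 h2
    rw [h1, h2] at ha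
    simp [hw2] at ha
    intro i; fin_cases i <;> simp [*]
  let B := basisOfLinearIndependentOfCardEqFinrank hli (by simp)
  refine ⟨B.equivFun, ?_, ?_⟩
  · have : B 0 = w := by simp [B]
    rw [← this]
    ext i
    simp [Pi.single_apply, eq_comm]
  · intro x
    conv_rhs => rw [← B.sum_equivFun x]
    simp [Fin.sum_univ_three, B, hlw, hw2'.1, h3l]

/-- Cayley-Bacharach: a linear relation between the evaluations at the points of the complete
intersection on forms of degree `e` which misses one point is trivial. -/
lemma cb [IsAlgClosed k] {e : ℕ} {c g : MvPolynomial (Fin 3) k}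
    (hc : c.IsHomogeneous 3) (hc0 : c ≠ 0) (hg : g.IsHomogeneous e)
    (S : Finset (ProjSpace k 2))
    (hS : ↑S = projZeroLocus k 2 c ∩ projZeroLocus k 2 g)
    (b : ProjSpace k 2 → k) (hb : ∀ F : MvPolynomial (Fin 3) k, F.IsHomogeneous e →
      ∑ q ∈ S, b q * eval q.rep F = 0)
    (p : ProjSpace k 2) (hpS : p ∈ S) (hp : b p = 0) : ∀ q ∈ S, b q = 0 := by
  classical
  have hmem : ∀ q, q ∈ S ↔ eval q.rep c = 0 ∧ eval q.rep g = 0 := by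
    intro q
    rw [← Finset.mem_coe, hS]; rfl
  obtain ⟨w, hw⟩ : ∃ w, eval w c ≠ 0 := by
    by_contra! h
    exact hc0 (MvPolynomial.funext (by simpa using h))
  have hw0 : w ≠ 0 := by
    rintro rfl
    apply hw
    have := eval_smul_hom hc 0 0
    simpa using this
  obtain ⟨l, hlw, hl⟩ : ∃ l ∈ LinearMap.ker (Module.Dual.eval k (Fin 3 → k) w),
      ∀ q : S, Module.Dual.eval k _ q.1.rep l ≠ 0 := by
    apply Module.Dual.exists_forall_mem_ne_zero_of_forall_exists
    rintro ⟨q, hq⟩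
    by_contra! h
    have hq' := (hmem q).mp hq
    have : q.rep ∈ Submodule.span k {w} := by
      by_contra hn
      obtain ⟨f, hf1, hf2⟩ := Submodule.exists_le_ker_of_notMem hn
      apply hf1
      apply h f
      simpa using hf2 (Submodule.mem_span_singleton_self w)
    obtain ⟨a, ha⟩ := Submodule.mem_span_singleton.mp this
    have h2 := hq'.1
    rw [← ha, eval_smul_hom hc] at h2
    have ha0 : a ≠ 0 := by
      rintro rfl
      exact q.rep_nonzero (by rw [← ha, zero_smul])
    exact (mul_ne_zero (pow_ne_zero _ ha0) hw) h2
  simp only [LinearMap.mem_ker, Module.Dual.eval_apply] at hlw hl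
  have hl0 : l ≠ 0 := by
    rintro rfl
    exact hl ⟨p, hpS⟩ rfl
  obtain ⟨E, hE0, hE2⟩ := exists_adapted w hw0 l hl0 hlw
  have hc' := linComp_hom E.symm.toLinearMap hc
  have hg' := linComp_hom E.symm.toLinearMap hg
  have hE0' : E.symm (Pi.single 0 1) = w := by rw [← hE0, E.symm_apply_apply]
  have key := cb_adapted (ι := S) hc' hg' ?_ ?_
    (fun q => (l q.1.rep)⁻¹ • E q.1.rep) ?_ ?_ ?_ ?_
    (fun q => b q.1 * (l q.1.rep) ^ e) ?_ ⟨p, hpS⟩ (by simp [hp])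
  · intro q hq
    have h1 := congrFun key ⟨q, hq⟩
    simpa [hl ⟨q, hq⟩] using h1
  · apply le_antisymm (resLine_natDegree_le hc')
    apply Polynomial.le_natDegree_of_ne_zero
    have h1 := resLine_coeff hc' (Finsupp.single 0 3) (by simp) (by simp)
    rw [← eval_e0 hc', eval_linComp] at h1
    simp only [Finsupp.single_eq_same] at h1
    rw [h1]
    simpa [hE0'] using hw
  · rintro s ⟨h1, h2⟩
    rw [eval_linComp] at h1 h2
    set y := E.symm.toLinearMap ![s, 1, 0] with hy
    have hEy : E y = ![s, 1, 0] := by simp [hy]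
    have hy0 : y ≠ 0 := by
      intro h
      rw [h, map_zero] at hEy
      have := congrFun hEy 1
      simp at this
    obtain ⟨a, ha⟩ := Projectivization.exists_smul_eq_mk_rep k y hy0
    have hin : Projectivization.mk k y hy0 ∈ S := by
      rw [hmem, ← ha, Units.smul_def, eval_smul_hom hc, eval_smul_hom hg, h1, h2]
      simp
    apply hl ⟨_, hin⟩
    simp only
    rw [← ha, Units.smul_def, map_smul, ← hE2, hEy]
    simp
  · intro q
    simp [hE2, hl q]
  · rintro ⟨q, hq⟩ ⟨q', hq'⟩ h
    simp only at h
    rw [← map_smul, ← map_smul] at h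
    have h := E.injective h
    have hq0 := hl ⟨q, hq⟩
    have hq0' := hl ⟨q', hq'⟩
    simp only at hq0 hq0'
    ext1
    simp only
    rw [← q.mk_rep, ← q'.mk_rep, Projectivization.mk_eq_mk_iff']
    refine ⟨l q.rep * (l q'.rep)⁻¹, ?_⟩
    rw [mul_smul, ← h, smul_smul, mul_inv_cancel₀ hq0, one_smul]
  · rintro ⟨q, hq⟩
    simp only [← map_smul, eval_linComp]
    simp [eval_smul_hom hc, ((hmem q).mp hq).1]
  · rintro ⟨q, hq⟩
    simp only [← map_smul, eval_linComp]
    simp [eval_smul_hom hg, ((hmem q).mp hq).2]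
  · intro F hF
    have h1 := hb _ (linComp_hom E.toLinearMap hF)
    rw [← h1, ← Finset.sum_coe_sort S]
    apply Finset.sum_congr rfl
    rintro ⟨q, hq⟩ _
    have hq0 := hl ⟨q, hq⟩
    simp only at hq0
    simp only [eval_smul_hom hF, inv_pow]
    field_simp
    exact congrArg (b q * ·) (eval_linComp E.toLinearMap F q.rep).symm

/-- The chosen representative of a point of the plane. -/
def pt (q : ProjSpace k 2) : Fin 3 → k := q.rep

lemma pt_ne_zero (q : ProjSpace k 2) : pt q ≠ 0 := q.rep_nonzero

/-- Proper subsets of the complete intersection impose independent conditions in degree `≥ e`. -/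
lemma indep [IsAlgClosed k] {e : ℕ} {c g : MvPolynomial (Fin 3) k}
    (hc : c.IsHomogeneous 3) (hc0 : c ≠ 0) (hg : g.IsHomogeneous e)
    {S A : Finset (ProjSpace k 2)}
    (hS : ↑S = projZeroLocus k 2 c ∩ projZeroLocus k 2 g) (hA : A ⊂ S) {m : ℕ} (hm : e ≤ m)
    (b : ProjSpace k 2 → k) (hb : ∀ F : MvPolynomial (Fin 3) k, F.IsHomogeneous m →
      ∑ q ∈ A, b q * eval (pt q) F = 0) : ∀ q ∈ A, b q = 0 := by
  classical
  intro q hq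
  obtain ⟨i, hi⟩ := Function.ne_iff.mp (pt_ne_zero q)
  obtain ⟨p, hpS, hpA⟩ := Finset.exists_of_ssubset hA
  have := cb hc hc0 hg S hS (fun q' => if q' ∈ A then b q' * (pt q' i) ^ (m - e) else 0) ?_
    p hpS (by simp [hpA]) q (hA.1 hq)
  · simp only [hq, if_true] at this
    exact (mul_eq_zero.mp this).resolve_right (pow_ne_zero _ hi)
  · intro F hF
    have h1 := hb (X i ^ (m - e) * F) (by
      have := (isHomogeneous_X_pow (R := k) i (m - e)).mul hF
      rwa [Nat.sub_add_cancel hm] at this)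
    refine Eq.trans ?_ h1
    rw [← Finset.sum_subset hA.1]
    · apply Finset.sum_congr rfl
      intro q' hq'
      simp only [hq', if_true, map_mul, map_pow, eval_X]
      rw [mul_assoc]
      rfl
    · intro x _ hx
      simp [hx]

lemma ker_two (a a' x y : Fin 3 → k) (h : LinearIndependent k ![a, a'])
    (hx : ∑ i, x i * a i = 0) (hx' : ∑ i, x i * a' i = 0)
    (hy : ∑ i, y i * a i = 0) (hy' : ∑ i, y i * a' i = 0) (hy0 : y ≠ 0) :
    ∃ t : k, x = t • y := by
  let M : Matrix (Fin 2) (Fin 3) k := Matrix.of ![a, a']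
  have hr : M.rank = 2 := by
    have : LinearIndependent k M.row := h
    simpa using this.rank_matrix
  have hk : ∀ z : Fin 3 → k, ∑ i, z i * a i = 0 → ∑ i, z i * a' i = 0 →
      z ∈ LinearMap.ker M.mulVecLin := by
    intro z h1 h2
    rw [LinearMap.mem_ker]
    ext j
    fin_cases j
    · simpa [M, Matrix.mulVec, dotProduct, mul_comm] using h1
    · simpa [M, Matrix.mulVec, dotProduct, mul_comm] using h2
  have hrn := LinearMap.finrank_range_add_finrank_ker M.mulVecLin
  rw [← Matrix.rank, hr] at hrn
  have h1 : Module.finrank k (LinearMap.ker M.mulVecLin) = 1 := by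
    simp at hrn; omega
  have h2 := (finrank_eq_one_iff_of_nonzero' (⟨y, hk y hy hy'⟩ : LinearMap.ker M.mulVecLin)
    (by simpa [Subtype.ext_iff] using hy0)).mp h1 ⟨x, hk x hx hx'⟩
  obtain ⟨t, ht⟩ := h2
  exact ⟨t, by simpa [Subtype.ext_iff] using ht.symm⟩

lemma euler_eval {m : ℕ} {F : MvPolynomial (Fin 3) k} (hF : F.IsHomogeneous m)
    (v : Fin 3 → k) : ∑ i, v i * eval v (pderiv i F) = m * eval v F := by
  have := congrArg (eval v) hF.sum_X_mul_pderiv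
  simpa [map_sum] using this

/-- A linear relation among the gradients of degree `2 e` forms at a proper subset is trivial. -/
lemma grad_indep [IsAlgClosed k] [CharZero k] {e : ℕ} (he : 3 ≤ e) {c g : MvPolynomial (Fin 3) k}
    (hc : c.IsHomogeneous 3) (hc0 : c ≠ 0) (hg : g.IsHomogeneous e)
    (htrans : ∀ v : Fin 3 → k, v ≠ 0 → eval v c = 0 → eval v g = 0 →
      LinearIndependent k ![fun i => eval v (pderiv i c), fun i => eval v (pderiv i g)])
    {S A : Finset (ProjSpace k 2)}
    (hS : ↑S = projZeroLocus k 2 c ∩ projZeroLocus k 2 g) (hA : A ⊂ S)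
    (a : ProjSpace k 2 → Fin 3 → k)
    (ha : ∀ F : MvPolynomial (Fin 3) k, F.IsHomogeneous (2 * e) →
      ∑ q ∈ A, ∑ i, a q i * eval (pt q) (pderiv i F) = 0) : ∀ q ∈ A, a q = 0 := by
  have hmem : ∀ q ∈ A, eval (pt q) c = 0 ∧ eval (pt q) g = 0 := by
    intro q hq
    have : q ∈ (S : Set (ProjSpace k 2)) := hA.1 hq
    rw [hS] at this
    exact this
  have hprod : ∀ (h f : MvPolynomial (Fin 3) k), (∀ q ∈ A, eval (pt q) h = 0) →
      ∑ q ∈ A, ∑ i, a q i * eval (pt q) (pderiv i (h * f))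
        = ∑ q ∈ A, (∑ i, a q i * eval (pt q) (pderiv i h)) * eval (pt q) f := by
    intro h f hh
    apply Finset.sum_congr rfl
    intro q hq
    rw [Finset.sum_mul]
    apply Finset.sum_congr rfl
    intro i _
    simp [Derivation.leibniz, hh q hq]
    ring
  have h1 := indep hc hc0 hg hS hA (m := 2 * e - 3) (by omega)
    (fun q => ∑ i, a q i * eval (pt q) (pderiv i c)) (by
      intro F hF
      rw [← hprod c F (fun q hq => (hmem q hq).1)]
      apply ha
      have := hc.mul hF
      rwa [Nat.add_sub_cancel' (by omega)] at this)
  have h2 := indep hc hc0 hg hS hA (m := e) le_rfl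
    (fun q => ∑ i, a q i * eval (pt q) (pderiv i g)) (by
      intro F hF
      rw [← hprod g F (fun q hq => (hmem q hq).2)]
      apply ha
      have := hg.mul hF
      rwa [← two_mul] at this)
  have h3 : ∀ q, ∃ t : k, q ∈ A → a q = t • pt q := by
    intro q
    by_cases hq : q ∈ A
    · obtain ⟨t, ht⟩ := ker_two _ _ (a q) (pt q)
        (htrans (pt q) (pt_ne_zero q) (hmem q hq).1 (hmem q hq).2)
        (h1 q hq) (h2 q hq) (by simp [euler_eval hc, hmem q hq]) (by simp [euler_eval hg, hmem q hq])
        (pt_ne_zero q)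
      exact ⟨t, fun _ => ht⟩
    · exact ⟨0, fun h => absurd h hq⟩
  choose t ht using h3
  have h4 := indep hc hc0 hg hS hA (m := 2 * e) (by omega) t (by
    intro F hF
    have h5 := ha F hF
    have h6 : ∑ q ∈ A, ∑ i, a q i * eval (pt q) (pderiv i F)
        = ((2 * e : ℕ) : k) * ∑ q ∈ A, t q * eval (pt q) F := by
      rw [Finset.mul_sum]
      apply Finset.sum_congr rfl
      intro q hq
      have := euler_eval hF (pt q)
      rw [ht q hq, mul_left_comm, ← this, Finset.mul_sum]
      apply Finset.sum_congr rfl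
      intro i _
      simp [mul_assoc]
    rw [h6] at h5
    refine (mul_eq_zero.mp h5).resolve_left ?_
    exact_mod_cast (by omega : 2 * e ≠ 0))
  intro q hq
  rw [ht q hq, h4 q hq, zero_smul]

lemma finrank_hom (m : ℕ) :
    Module.finrank k (homogeneousSubmodule (Fin 3) k m) = (m + 2).choose 2 := by
  have hspan : homogeneousSubmodule (Fin 3) k m = Submodule.span k (Set.range
      (fun s : (Finset.univ : Finset (Fin 3)).finsuppAntidiag m => monomial s.1 (1 : k))) := by
    apply le_antisymm
    · intro F hF
      rw [F.as_sum]
      apply Submodule.sum_mem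
      intro s hs
      have h1 : s.degree = m := by
        by_contra hne
        exact (mem_support_iff.mp hs) (IsHomogeneous.coeff_eq_zero hF hne)
      have h2 : monomial s (coeff s F) = coeff s F • monomial s (1 : k) := by
        simp [smul_monomial]
      rw [h2]
      apply Submodule.smul_mem
      apply Submodule.subset_span
      refine ⟨⟨s, ?_⟩, rfl⟩
      rw [Finset.mem_finsuppAntidiag]
      refine ⟨?_, by simp⟩
      rw [← h1, Finsupp.degree_eq_sum]
    · rw [Submodule.span_le]
      rintro _ ⟨⟨s, hs⟩, rfl⟩
      apply isHomogeneous_monomial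
      rw [Finset.mem_finsuppAntidiag] at hs
      rw [Finsupp.degree_eq_sum]
      exact hs.1
  rw [hspan, finrank_span_eq_card]
  · rw [Fintype.card_coe, Finset.card_finsuppAntidiag_nat_eq_choose]
    simp only [Finset.card_univ, Fintype.card_fin]
    rw [show 3 + m - 1 = m + 2 by omega, ← Nat.choose_symm_of_eq_add (show m + 2 = m + 2 from rfl)]
  · have h := (basisMonomials (Fin 3) k).linearIndependent.comp
      (fun s : (Finset.univ : Finset (Fin 3)).finsuppAntidiag m => s.1) Subtype.val_injective
    rw [coe_basisMonomials] at h
    exact h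

instance hom_finite (m : ℕ) : Module.Finite k (homogeneousSubmodule (Fin 3) k m) :=
  Module.Finite.iff_fg.mpr (homogeneousSubmodule_fg _ _ m)

/-- The gradient map at a finite set of points. -/
def gradMap (d : ℕ) (A : Finset (ProjSpace k 2)) :
    homogeneousSubmodule (Fin 3) k d →ₗ[k] (A × Fin 3 → k) :=
  LinearMap.pi fun x => ((MvPolynomial.aeval (pt x.1.1)).toLinearMap.comp
    (MvPolynomial.pderiv x.2).toLinearMap).comp (Submodule.subtype _)

lemma gradMap_apply (d : ℕ) (A : Finset (ProjSpace k 2)) (F) (x : A × Fin 3) :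
    gradMap d A F x = eval (pt x.1.1) (pderiv x.2 F.1) := by
  simp [gradMap, aeval_eq_eval]

/-- The evaluation map at a finite set of points. -/
def evMap (d : ℕ) (A : Finset (ProjSpace k 2)) :
    homogeneousSubmodule (Fin 3) k d →ₗ[k] (A → k) :=
  LinearMap.pi fun x => ((MvPolynomial.aeval (pt x.1)).toLinearMap).comp (Submodule.subtype _)

lemma evMap_apply (d : ℕ) (A : Finset (ProjSpace k 2)) (F) (x : A) :
    evMap d A F x = eval (pt x.1) F.1 := by
  simp [evMap, aeval_eq_eval]

lemma mem_h0space {d : ℕ} {A : Finset (ProjSpace k 2)} {F : MvPolynomial (Fin 3) k} :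
    F ∈ (homogeneousSubmodule (Fin (2+1)) k d ⊓ ⨅ p ∈ A, doubleVanishing k p.rep) ↔
      F.IsHomogeneous d ∧ ∀ q ∈ A, eval (pt q) F = 0 ∧ ∀ i, eval (pt q) (pderiv i F) = 0 := by
  rw [Submodule.mem_inf, mem_homogeneousSubmodule]
  apply and_congr Iff.rfl
  simp only [Submodule.mem_iInf]
  apply forall_congr'; intro q
  apply forall_congr'; intro _
  rw [doubleVanishing, Submodule.mem_inf, Submodule.mem_iInf]
  rfl

lemma h0_eq_ker [CharZero k] (d : ℕ) (hd : d ≠ 0) (A : Finset (ProjSpace k 2)) :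
    h0 k 2 d A = Module.finrank k (LinearMap.ker (gradMap d A)) := by
  rw [h0, ← Submodule.finrank_map_subtype_eq]
  have : (homogeneousSubmodule (Fin (2+1)) k d ⊓ ⨅ p ∈ A, doubleVanishing k p.rep)
      = Submodule.map (homogeneousSubmodule (Fin 3) k d).subtype
        (LinearMap.ker (gradMap d A)) := by
    ext F
    rw [mem_h0space, Submodule.mem_map]
    constructor
    · rintro ⟨h1, h2⟩
      refine ⟨⟨F, h1⟩, ?_, rfl⟩
      rw [LinearMap.mem_ker]
      ext x
      rw [gradMap_apply]
      exact (h2 _ x.1.2).2 _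
    · rintro ⟨⟨F, h1⟩, h2, rfl⟩
      refine ⟨h1, fun q hq => ?_⟩
      have h3 : ∀ i, eval (pt q) (pderiv i F) = 0 := by
        intro i
        have := congrFun (LinearMap.mem_ker.mp h2) (⟨q, hq⟩, i)
        rwa [gradMap_apply] at this
      refine ⟨?_, h3⟩
      have := euler_eval h1 (pt q)
      simp only [h3, mul_zero, Finset.sum_const_zero] at this
      have hd' : (d : k) ≠ 0 := by exact_mod_cast hd
      exact (mul_eq_zero.mp this.symm).resolve_left hd'
  rw [this]

lemma surj_of_indep {V ι : Type*} [AddCommGroup V] [Module k V] [Fintype ι]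
    (f : V →ₗ[k] (ι → k)) (h : ∀ a : ι → k, (∀ x, ∑ i, a i * f x i = 0) → a = 0) :
    Function.Surjective f := by
  classical
  rw [← LinearMap.range_eq_top]
  by_contra hne
  obtain ⟨l, hl0, hl⟩ := Submodule.exists_le_ker_of_lt_top _ (lt_top_iff_ne_top.mpr hne)
  apply hl0
  have := h (fun i => l (Pi.single i 1)) (by
    intro x
    have h1 : l (f x) = 0 := hl ⟨x, rfl⟩
    rw [LinearMap.pi_apply_eq_sum_univ] at h1
    rw [← h1]
    apply Finset.sum_congr rfl
    intro i _
    rw [smul_eq_mul, mul_comm]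
    congr 2
    ext j
    simp [Pi.single_apply, eq_comm])
  ext i
  simpa using congrFun this i

lemma h1_proper [IsAlgClosed k] [CharZero k] {e : ℕ} (he : 3 ≤ e) {c g : MvPolynomial (Fin 3) k}
    (hc : c.IsHomogeneous 3) (hc0 : c ≠ 0) (hg : g.IsHomogeneous e)
    (htrans : ∀ v : Fin 3 → k, v ≠ 0 → eval v c = 0 → eval v g = 0 →
      LinearIndependent k ![fun i => eval v (pderiv i c), fun i => eval v (pderiv i g)])
    {S A : Finset (ProjSpace k 2)}
    (hS : ↑S = projZeroLocus k 2 c ∩ projZeroLocus k 2 g) (hA : A ⊂ S) :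
    h1 k 2 (2 * e) A = 0 := by
  classical
  have hsurj : Function.Surjective (gradMap (k := k) (2 * e) A) := by
    apply surj_of_indep
    intro a ha
    have := grad_indep he hc hc0 hg htrans hS hA
      (fun q i => if hq : q ∈ A then a (⟨q, hq⟩, i) else 0) (by
        intro F hF
        rw [← ha ⟨F, hF⟩, Fintype.sum_prod_type, ← Finset.sum_coe_sort A]
        apply Finset.sum_congr rfl
        rintro ⟨q, hq⟩ _
        apply Finset.sum_congr rfl
        intro i _
        simp only [gradMap_apply, hq, dif_pos])
    ext ⟨⟨q, hq⟩, i⟩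
    have h2 := congrFun (this q hq) i
    simpa [hq] using h2
  have hrn := LinearMap.finrank_range_add_finrank_ker (gradMap (k := k) (2 * e) A)
  rw [LinearMap.range_eq_top.mpr hsurj, finrank_top, Module.finrank_fintype_fun_eq_card,
    finrank_hom, ← h0_eq_ker _ (by omega)] at hrn
  simp only [Fintype.card_prod, Fintype.card_coe, Fintype.card_fin] at hrn
  rw [h1, add_comm 2 (2 * e), ← hrn]
  push_cast
  ring

lemma ev_surj [IsAlgClosed k] {e : ℕ} {c g : MvPolynomial (Fin 3) k}
    (hc : c.IsHomogeneous 3) (hc0 : c ≠ 0) (hg : g.IsHomogeneous e)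
    {S A : Finset (ProjSpace k 2)}
    (hS : ↑S = projZeroLocus k 2 c ∩ projZeroLocus k 2 g) (hA : A ⊂ S) :
    Function.Surjective (evMap (k := k) e A) := by
  classical
  apply surj_of_indep
  intro a ha
  have := indep hc hc0 hg hS hA le_rfl
    (fun q => if hq : q ∈ A then a ⟨q, hq⟩ else 0) (by
      intro F hF
      rw [← ha ⟨F, hF⟩, ← Finset.sum_coe_sort A]
      apply Finset.sum_congr rfl
      rintro ⟨q, hq⟩ _
      simp only [evMap_apply, hq, dif_pos])
  ext ⟨q, hq⟩
  have h2 := this q hq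
  simpa [hq] using h2

/-- Multiplication by a fixed form. -/
def mulForm {a : ℕ} (c : MvPolynomial (Fin 3) k) (hc : c.IsHomogeneous a) (m n : ℕ)
    (h : a + m = n) :
    homogeneousSubmodule (Fin 3) k m →ₗ[k] homogeneousSubmodule (Fin 3) k n :=
  ((LinearMap.mulLeft k c).comp (Submodule.subtype _)).codRestrict _ (fun F => by
    have h1 : IsHomogeneous F.1 m := F.2
    have := hc.mul h1
    rw [h] at this
    exact this)

lemma mulForm_coe {a : ℕ} (c : MvPolynomial (Fin 3) k) (hc : c.IsHomogeneous a) (m n : ℕ)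
    (h : a + m = n) (F) : (mulForm c hc m n h F).1 = c * F.1 := rfl

lemma spans_S [IsAlgClosed k] {e : ℕ} (he : 3 ≤ e) {c g : MvPolynomial (Fin 3) k}
    (hc : c.IsHomogeneous 3) (hc0 : c ≠ 0) (hg : g.IsHomogeneous e)
    {S : Finset (ProjSpace k 2)}
    (hS : ↑S = projZeroLocus k 2 c ∩ projZeroLocus k 2 g) (hcard : S.card = 3 * e) :
    Spans k 2 S := by
  classical
  by_contra hne
  obtain ⟨l, hl0, hl⟩ := Submodule.exists_le_ker_of_lt_top _ (lt_top_iff_ne_top.mpr hne)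
  obtain ⟨p, hp⟩ : S.Nonempty := by
    rw [← Finset.card_pos]; omega
  have hA := Finset.erase_ssubset hp
  have hsurj := ev_surj hc hc0 hg hS hA
  have hrn := LinearMap.finrank_range_add_finrank_ker (evMap (k := k) e (S.erase p))
  rw [LinearMap.range_eq_top.mpr hsurj, finrank_top, Module.finrank_fintype_fun_eq_card,
    finrank_hom, Fintype.card_coe, Finset.card_erase_of_mem hp, hcard] at hrn
  let f : MvPolynomial (Fin 3) k := ∑ i, C (l (Pi.single i 1)) * X i
  have hf : f.IsHomogeneous 1 := IsHomogeneous.sum _ _ _ fun i _ => isHomogeneous_C_mul_X _ _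
  have hfe : ∀ x, eval x f = l x := by
    intro x
    rw [LinearMap.pi_apply_eq_sum_univ l x]
    simp only [f, map_sum, map_mul, eval_C, eval_X]
    apply Finset.sum_congr rfl
    intro i _
    rw [smul_eq_mul, mul_comm]
    congr 2
    ext j
    simp [Pi.single_apply, eq_comm]
  have hf0 : f ≠ 0 := by
    intro h
    apply hl0
    ext1 i
    ext
    have := hfe (Pi.single i 1)
    rw [h] at this
    simpa using this.symm
  obtain ⟨e', rfl⟩ : ∃ e', e = 1 + e' := ⟨e - 1, by omega⟩
  have hinj : Function.Injective (mulForm f hf e' (1 + e') rfl) := by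
    intro F G h
    have := congrArg Subtype.val h
    rw [mulForm_coe, mulForm_coe] at this
    exact Subtype.ext (mul_left_cancel₀ hf0 this)
  have hle : LinearMap.range (mulForm f hf e' (1 + e') rfl) ≤
      LinearMap.ker (evMap (k := k) (1 + e') (S.erase p)) := by
    rintro _ ⟨F, rfl⟩
    rw [LinearMap.mem_ker]
    ext ⟨q, hq⟩
    rw [evMap_apply, mulForm_coe, map_mul, hfe]
    have : l (pt q) = 0 := hl (Submodule.subset_span ⟨q, Finset.mem_of_mem_erase hq, rfl⟩)
    rw [this]; simp
  have hd := Submodule.finrank_mono hle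
  rw [LinearMap.finrank_range_of_inj hinj, finrank_hom] at hd
  have h3 : (1 + e' + 2).choose 2 = (e' + 2).choose 2 + (e' + 2) := by
    rw [show 1 + e' + 2 = (e' + 2) + 1 by omega, Nat.choose_succ_succ' (e' + 2) 1]
    simp [add_comm]
  omega

lemma not_sq [CharZero k] {c g f : MvPolynomial (Fin 3) k} (v : Fin 3 → k)
    (hvc : eval v c = 0) (hvg : eval v g = 0) (hvf : eval v f = 0)
    (hli : LinearIndependent k ![fun i => eval v (pderiv i c), fun i => eval v (pderiv i g)]) :
    g * g ≠ c * f := by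
  intro h
  obtain ⟨w, hw1, hw2⟩ : ∃ w : Fin 3 → k, ∑ i, w i * eval v (pderiv i c) = 0 ∧
      ∑ i, w i * eval v (pderiv i g) ≠ 0 := by
    have hn : (fun i => eval v (pderiv i g)) ∉
        Submodule.span k {fun i => eval v (pderiv i c)} := by
      rw [LinearIndependent.pair_iff] at hli
      intro hm
      obtain ⟨t, ht⟩ := Submodule.mem_span_singleton.mp hm
      have := hli t (-1) (by rw [ht]; simp)
      simp at this
    obtain ⟨l, hl1, hl2⟩ := Submodule.exists_le_ker_of_notMem hn
    have hl3 : l (fun i => eval v (pderiv i c)) = 0 :=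
      hl2 (Submodule.mem_span_singleton_self _)
    have hl : ∀ x, l x = ∑ i, l (Pi.single i 1) * x i := by
      intro x
      rw [LinearMap.pi_apply_eq_sum_univ l x]
      apply Finset.sum_congr rfl
      intro i _
      rw [smul_eq_mul, mul_comm]
      congr 2
      ext j
      simp [Pi.single_apply, eq_comm]
    refine ⟨fun i => l (Pi.single i 1), ?_, ?_⟩
    · rw [← hl3, hl]
    · rw [hl] at hl1; exact hl1
  let D : Derivation k (MvPolynomial (Fin 3) k) (MvPolynomial (Fin 3) k) :=
    ∑ i, w i • pderiv i
  have hD : ∀ F, eval v (D F) = ∑ i, w i * eval v (pderiv i F) := by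
    intro F
    simp [D, Fin.sum_univ_three]
  have h2 := congrArg (fun F => eval v (D (D F))) h
  simp only [Derivation.leibniz, map_add, map_mul, smul_eq_mul, hvc, hvg, hvf, zero_mul,
    zero_add] at h2
  rw [hD c, hw1, hD g] at h2
  simp only [zero_mul, mul_zero, add_zero] at h2
  have h3 : (2 : k) * ((∑ i, w i * eval v (pderiv i g)) * (∑ i, w i * eval v (pderiv i g))) = 0 := by
    linear_combination h2
  simp [hw2] at h3

lemma finrank_add_one_le {V V' : Type*} [AddCommGroup V] [Module k V] [AddCommGroup V']
    [Module k V'] [Module.Finite k V] [Module.Finite k V'] (M : V →ₗ[k] V') (W : Submodule k V)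
    (K : Submodule k V') (x : V') (hx : x ∈ K) (hM : ∀ w ∈ W, M w ∈ K)
    (hinj : ∀ w ∈ W, ∀ t : k, M w + t • x = 0 → w = 0 ∧ t = 0) :
    Module.finrank k W + 1 ≤ Module.finrank k K := by
  let T : W × k →ₗ[k] V' := (M.comp (Submodule.subtype W)).coprod (LinearMap.toSpanSingleton k _ x)
  have hT : ∀ y : W × k, T y = M y.1.1 + y.2 • x := by
    intro y
    simp [T]
  have hTinj : Function.Injective T := by
    refine (injective_iff_map_eq_zero T).mpr ?_
    rintro ⟨w, t⟩ h
    rw [hT] at h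
    obtain ⟨h1, h2⟩ := hinj w.1 w.2 t h
    ext
    · exact h1
    · exact h2
  have hTK : ∀ y, T y ∈ K := by
    intro y
    rw [hT]
    exact K.add_mem (hM _ y.1.2) (K.smul_mem _ hx)
  have h5 := LinearMap.finrank_le_finrank_of_injective (f := T.codRestrict _ hTK)
    (fun x y h => hTinj (congrArg Subtype.val h))
  rwa [Module.finrank_prod, Module.finrank_self] at h5

lemma h0_lower [CharZero k] {e : ℕ} (he : 3 ≤ e) {c g : MvPolynomial (Fin 3) k}
    (hc : c.IsHomogeneous 3) (hc0 : c ≠ 0) (hg : g.IsHomogeneous e)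
    (htrans : ∀ v : Fin 3 → k, v ≠ 0 → eval v c = 0 → eval v g = 0 →
      LinearIndependent k ![fun i => eval v (pderiv i c), fun i => eval v (pderiv i g)])
    {S : Finset (ProjSpace k 2)}
    (hS : ↑S = projZeroLocus k 2 c ∩ projZeroLocus k 2 g) (hcard : S.card = 3 * e) :
    (2 * e - 3 + 2).choose 2 + 1 ≤ h0 k 2 (2 * e) S + 3 * e := by
  have hmem : ∀ q ∈ S, eval (pt q) c = 0 ∧ eval (pt q) g = 0 := by
    intro q hq
    have : q ∈ (S : Set (ProjSpace k 2)) := hq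
    rw [hS] at this
    exact this
  obtain ⟨p, hp⟩ : S.Nonempty := by
    rw [← Finset.card_pos]; omega
  let W := LinearMap.ker (evMap (k := k) (2 * e - 3) S)
  have hW : (2 * e - 3 + 2).choose 2 ≤ Module.finrank k W + 3 * e := by
    have hrn := LinearMap.finrank_range_add_finrank_ker (evMap (k := k) (2 * e - 3) S)
    have h1 := Submodule.finrank_le (LinearMap.range (evMap (k := k) (2 * e - 3) S))
    rw [Module.finrank_fintype_fun_eq_card, Fintype.card_coe, hcard] at h1
    rw [finrank_hom] at hrn
    simp only [W]
    omega
  have hWm : ∀ f ∈ W, ∀ q ∈ S, eval (pt q) f.1 = 0 := by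
    intro f hf q hq
    have := congrFun (LinearMap.mem_ker.mp hf) ⟨q, hq⟩
    rwa [evMap_apply] at this
  rw [h0_eq_ker _ (by omega)]
  have hgg : (g * g).IsHomogeneous (2 * e) := by
    have := hg.mul hg
    rwa [← two_mul] at this
  have h5 := finrank_add_one_le (mulForm c hc (2 * e - 3) (2 * e) (by omega)) W
    (LinearMap.ker (gradMap (k := k) (2 * e) S)) ⟨g * g, hgg⟩ ?_ ?_ ?_
  · omega
  · rw [LinearMap.mem_ker]
    ext ⟨⟨q, hq⟩, i⟩
    rw [gradMap_apply]
    simp [Derivation.leibniz, hmem q hq]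
  · intro f hf
    rw [LinearMap.mem_ker]
    ext ⟨⟨q, hq⟩, i⟩
    rw [gradMap_apply, mulForm_coe]
    simp [Derivation.leibniz, hmem q hq, hWm f hf q hq]
  · intro f hf t h
    have h1 : c * f.1 + t • (g * g) = 0 := congrArg Subtype.val h
    have ht : t = 0 := by
      by_contra ht
      refine not_sq (c := c) (g := g) (f := C (-t⁻¹) * f.1) (pt p) (hmem p hp).1 (hmem p hp).2
        (by simp [hWm f hf p hp]) (htrans _ (pt_ne_zero p) (hmem p hp).1 (hmem p hp).2) ?_
      rw [smul_eq_C_mul] at h1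
      have h2 : C t⁻¹ * C t = (1 : MvPolynomial (Fin 3) k) := by
        rw [← C_mul, inv_mul_cancel₀ ht, C_1]
      rw [C_neg]
      linear_combination C t⁻¹ * h1 - (g * g) * h2
    subst ht
    simp only [zero_smul, add_zero] at h1
    have h3 := (mul_eq_zero.mp h1).resolve_left hc0
    exact ⟨Subtype.ext h3, rfl⟩

end CBsec

/-- Example: for even `d ≥ 6` and `x = 3d/2`, the complete intersection of a smooth plane
cubic and a smooth plane curve of degree `d/2` meeting it transversally is a minimally
Terracini set; in particular `T(2,d;3d/2)' ≠ ∅`. -/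
theorem cubic_complete_intersection_minTerracini
    (k : Type*) [Field k] [IsAlgClosed k] [CharZero k]
    (d : ℕ) (hd : 6 ≤ d) (heven : Even d)
    (c g : MvPolynomial (Fin 3) k)
    (hc : IsSmoothPlaneCurve k 3 c) (hg : IsSmoothPlaneCurve k (d / 2) g)
    (htrans : ∀ v : Fin 3 → k, v ≠ 0 →
      MvPolynomial.eval v c = 0 → MvPolynomial.eval v g = 0 →
      LinearIndependent k
        ![fun i => MvPolynomial.eval v (MvPolynomial.pderiv i c),
          fun i => MvPolynomial.eval v (MvPolynomial.pderiv i g)])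
    (S : Finset (ProjSpace k 2))
    (hS : ↑S = projZeroLocus k 2 c ∩ projZeroLocus k 2 g)
    (hcard : S.card = 3 * d / 2) :
    S ∈ minTerracini k 2 d (3 * d / 2) ∧
      (minTerracini k 2 d (3 * d / 2)).Nonempty := by
  obtain ⟨e, rfl⟩ : ∃ e, d = 2 * e := by
    obtain ⟨r, hr⟩ := heven
    exact ⟨r, by omega⟩
  have he : 3 ≤ e := by omega
  have hx : 3 * (2 * e) / 2 = 3 * e := by omega
  rw [show 2 * e / 2 = e by omega] at hg
  rw [hx] at hcard ⊢
  obtain ⟨hc0, hc3, -⟩ := hc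
  obtain ⟨-, hge, -⟩ := hg
  have hc3 : c.IsHomogeneous 3 := hc3
  have hge : g.IsHomogeneous e := hge
  have hlow := h0_lower he hc3 hc0 hge htrans hS hcard
  have hch : (2 + 2 * e).choose 2 = (2 * e - 3 + 2).choose 2 + 6 * e := by
    obtain ⟨a, rfl⟩ : ∃ a, e = a + 3 := ⟨e - 3, by omega⟩
    rw [show 2 + 2 * (a + 3) = 2 * a + 5 + 1 + 1 + 1 by omega,
      show 2 * (a + 3) - 3 + 2 = 2 * a + 5 by omega]
    simp only [Nat.choose_succ_succ' _ 1, Nat.choose_one_right]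
    omega
  have hlin : 3 * e < (2 * e - 3 + 2).choose 2 + 1 := by
    rw [Nat.choose_two_right, Nat.lt_succ_iff, Nat.le_div_iff_mul_le (by norm_num)]
    obtain ⟨a, rfl⟩ : ∃ a, e = a + 3 := ⟨e - 3, by omega⟩
    rw [show 2 * (a + 3) - 3 + 2 = 2 * a + 5 by omega, show 2 * a + 5 - 1 = 2 * a + 4 by omega]
    nlinarith
  have main : S ∈ minTerracini k 2 (2 * e) (3 * e) := by
    refine ⟨⟨hcard, spans_S he hc3 hc0 hge hS hcard, by omega, ?_⟩, fun A hA =>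
      h1_proper he hc3 hc0 hge htrans hS hA⟩
    rw [h1, hcard, hch]
    push_cast
    have : (((2 * e - 3 + 2).choose 2 + 1 : ℕ) : ℤ) ≤ ((h0 k 2 (2 * e) S + 3 * e : ℕ) : ℤ) := by
      exact_mod_cast hlow
    push_cast at this
    linarith
  exact ⟨main, ⟨S, main⟩⟩
end

section
/- Fix integers d ≥ 4 and x such that 2x ≤ 3d + 1. Then T(3,d;x)' = ∅. -/
open MvPolynomial

open Module
set_option linter.unusedSectionVars false
set_option linter.unusedVariables false

namespace TerrAux
section
variable {k : Type*} [Field k] {V : Type*} [AddCommGroup V] [Module k V]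
  {ι : Type*} [Fintype ι]

/-- Residual scalar coefficients. -/
def ra (P : ι → V) (h : Dual k V) (a : ι → k) (v : ι → V) : ι → k :=
  fun i => a i * h (P i) + h (v i)

/-- Residual vector coefficients. -/
def rv (P : ι → V) (h : Dual k V) (v : ι → V) : ι → V :=
  fun i => h (P i) • v i

/-- The functional kills all products of `e` linear forms. -/
def Rel (P : ι → V) : ℕ → (ι → k) → (ι → V) → Prop
  | 0, a, _ => ∑ i, a i = 0
  | e + 1, a, v => ∀ h : Dual k V, Rel P e (ra P h a v) (rv P h v)

open Classical in
/-- Local degree. -/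
noncomputable def wt (a : ι → k) (v : ι → V) (i : ι) : ℕ :=
  if v i = 0 then (if a i = 0 then 0 else 1) else 2

open Classical in
/-- Local degree of the part inside `U`. -/
noncomputable def dg (P : ι → V) (U : Submodule k V) (a : ι → k) (v : ι → V) (i : ι) : ℕ :=
  if P i ∈ U then
    (if v i = 0 then (if a i = 0 then 0 else 1) else if v i ∈ U then 2 else 1) else 0

noncomputable def W (a : ι → k) (v : ι → V) : ℕ := ∑ i, wt a v i
noncomputable def D (P : ι → V) (U : Submodule k V) (a : ι → k) (v : ι → V) : ℕ :=
  ∑ i, dg P U a v i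

lemma dg_le_wt (P : ι → V) (U : Submodule k V) (a : ι → k) (v : ι → V) (i : ι) :
    dg P U a v i ≤ wt a v i := by
  unfold dg wt; split_ifs <;> simp

lemma D_le_W (P : ι → V) (U : Submodule k V) (a : ι → k) (v : ι → V) : D P U a v ≤ W a v :=
  Finset.sum_le_sum fun i _ => dg_le_wt P U a v i

lemma dg_mono (P : ι → V) {U U' : Submodule k V} (hU : U ≤ U') (a : ι → k) (v : ι → V) (i : ι) :
    dg P U a v i ≤ dg P U' a v i := by
  unfold dg
  have h1 := @hU (P i)
  have h2 := @hU (v i)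
  split_ifs <;> simp_all

lemma D_mono (P : ι → V) {U U' : Submodule k V} (hU : U ≤ U') (a : ι → k) (v : ι → V) :
    D P U a v ≤ D P U' a v :=
  Finset.sum_le_sum fun i _ => dg_mono P hU a v i

lemma wt_res (P : ι → V) (h : Dual k V) (a : ι → k) (v : ι → V) (i : ι) :
    wt (ra P h a v) (rv P h v) i + dg P (LinearMap.ker h) a v i = wt a v i := by
  unfold wt dg ra rv
  by_cases hP : h (P i) = 0 <;> by_cases hv : v i = 0 <;> by_cases hhv : h (v i) = 0 <;>
    by_cases ha : a i = 0 <;> simp_all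

lemma W_res (P : ι → V) (h : Dual k V) (a : ι → k) (v : ι → V) :
    W (ra P h a v) (rv P h v) + D P (LinearMap.ker h) a v = W a v := by
  unfold W D
  rw [← Finset.sum_add_distrib]
  exact Finset.sum_congr rfl fun i _ => wt_res P h a v i

lemma dg_res_le (P : ι → V) (h : Dual k V) (U : Submodule k V) (a : ι → k) (v : ι → V) (i : ι) :
    dg P U (ra P h a v) (rv P h v) i ≤ dg P U a v i := by
  unfold dg ra rv
  by_cases hP : h (P i) = 0 <;> by_cases hv : v i = 0 <;> by_cases hhv : h (v i) = 0 <;>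
    by_cases ha : a i = 0 <;> by_cases hPU : P i ∈ U <;> by_cases hvU : v i ∈ U <;>
    simp_all [Submodule.smul_mem_iff]

lemma D_res_le (P : ι → V) (h : Dual k V) (U : Submodule k V) (a : ι → k) (v : ι → V) :
    D P U (ra P h a v) (rv P h v) ≤ D P U a v :=
  Finset.sum_le_sum fun i _ => dg_res_le P h U a v i

/-- Admissible tangent data. -/
def Good (P : ι → V) (v : ι → V) : Prop := ∀ i, v i ≠ 0 → v i ∉ Submodule.span k {P i}

lemma Good.res {P v : ι → V} (hg : Good (k := k) P v) (h : Dual k V) :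
    Good (k := k) P (rv P h v) := by
  intro i hi hm
  unfold rv at hi hm
  have h1 : h (P i) ≠ 0 := fun h0 => hi (by simp [h0])
  rw [Submodule.smul_mem_iff _ h1] at hm
  exact hg i (fun h0 => hi (by simp [h0])) hm

/-- Distinct projective points. -/
def Dist (k : Type*) [Field k] {V : Type*} [AddCommGroup V] [Module k V] {ι : Type*}
    (P : ι → V) : Prop :=
  (∀ i, P i ≠ 0) ∧ ∀ i j, P j ∈ Submodule.span k {P i} → j = i

lemma exists_dg_lt {P : ι → V} {U : Submodule k V} {a : ι → k} {v : ι → V}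
    (h : D P U a v < W a v) : ∃ i, dg P U a v i < wt a v i := by
  by_contra! hc
  exact absurd (Finset.sum_le_sum fun i _ => hc i) (not_le.mpr h)

lemma dg_lt_out {P : ι → V} {U : Submodule k V} {a : ι → k} {v : ι → V} {i : ι}
    (h : dg P U a v i < wt a v i) : P i ∉ U ∨ (P i ∈ U ∧ v i ∉ U) := by
  by_cases h1 : P i ∈ U
  · right
    refine ⟨h1, fun h2 => ?_⟩
    unfold dg wt at h
    simp_all
  · exact Or.inl h1

/-- Enlarging a subspace by one dimension to gain degree. -/
lemma enlarge {P : ι → V} {U : Submodule k V} {a : ι → k} {v : ι → V}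
    (h : D P U a v < W a v) : ∃ x : V, D P U a v + 1 ≤ D P (U ⊔ Submodule.span k {x}) a v := by
  obtain ⟨i, hi⟩ := exists_dg_lt h
  have key : ∀ x : V, dg P U a v i < dg P (U ⊔ Submodule.span k {x}) a v i →
      D P U a v + 1 ≤ D P (U ⊔ Submodule.span k {x}) a v := by
    intro x hx
    exact Finset.sum_lt_sum (fun j _ => dg_mono P le_sup_left a v j) ⟨i, Finset.mem_univ _, hx⟩
  rcases dg_lt_out hi with h1 | ⟨h1, h2⟩
  · refine ⟨P i, key _ ?_⟩
    have : P i ∈ U ⊔ Submodule.span k {P i} :=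
      (le_sup_right : _ ≤ U ⊔ Submodule.span k {P i}) (Submodule.mem_span_singleton_self _)
    unfold dg wt at *
    simp only [h1, this, if_true, if_false] at *
    split_ifs at * <;> simp_all
  · refine ⟨v i, key _ ?_⟩
    have h3 : v i ∈ U ⊔ Submodule.span k {v i} :=
      (le_sup_right : _ ≤ U ⊔ Submodule.span k {v i}) (Submodule.mem_span_singleton_self _)
    have h4 : P i ∈ U ⊔ Submodule.span k {v i} := (le_sup_left : U ≤ _) h1
    have h5 : v i ≠ 0 := fun h0 => h2 (h0 ▸ U.zero_mem)
    unfold dg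
    simp [h1, h2, h3, h4, h5]

/-- A form through `U` not containing the whole scheme. -/
lemma separate {P : ι → V} {U : Submodule k V} {a : ι → k} {v : ι → V}
    (h : D P U a v < W a v) : ∃ f : Dual k V, U ≤ LinearMap.ker f ∧
      0 < W (ra P f a v) (rv P f v) := by
  obtain ⟨i, hi⟩ := exists_dg_lt h
  have key : ∀ f : Dual k V, 0 < wt (ra P f a v) (rv P f v) i → 0 < W (ra P f a v) (rv P f v) :=
    fun f hf => lt_of_lt_of_le hf
      (Finset.single_le_sum (f := fun i => wt (ra P f a v) (rv P f v) i)
        (fun j _ => Nat.zero_le _) (Finset.mem_univ i))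
  have hw : 0 < wt a v i := by omega
  rcases dg_lt_out hi with h1 | ⟨h1, h2⟩
  · obtain ⟨f, hf, hU⟩ := Submodule.exists_le_ker_of_notMem h1
    refine ⟨f, hU, key f ?_⟩
    have ha : v i = 0 → a i ≠ 0 := by
      intro hv ha
      unfold wt at hw
      simp [hv, ha] at hw
    unfold wt ra rv
    by_cases hv : v i = 0
    · simp [hv, ha hv, hf]
    · simp [hv, hf]
  · obtain ⟨f, hf, hU⟩ := Submodule.exists_le_ker_of_notMem h2
    refine ⟨f, hU, key f ?_⟩
    have h4 : f (P i) = 0 := hU h1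
    unfold wt ra rv
    simp_all

lemma W_zero {a : ι → k} {v : ι → V} (h : W a v = 0) (i : ι) : v i = 0 ∧ a i = 0 := by
  unfold W at h
  have := (Finset.sum_eq_zero_iff.mp h) i (Finset.mem_univ _)
  unfold wt at this
  by_cases hv : v i = 0 <;> by_cases ha : a i = 0 <;> simp_all

lemma wt_le_W (a : ι → k) (v : ι → V) (i : ι) : wt a v i ≤ W a v :=
  Finset.single_le_sum (f := fun i => wt a v i) (fun j _ => Nat.zero_le _) (Finset.mem_univ i)

lemma dg_le_D (P : ι → V) (U : Submodule k V) (a : ι → k) (v : ι → V) (i : ι) :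
    dg P U a v i ≤ D P U a v :=
  Finset.single_le_sum (f := fun i => dg P U a v i) (fun j _ => Nat.zero_le _) (Finset.mem_univ i)

lemma lemma0 {P : ι → V} (hP : Dist k P) (e : ℕ) : ∀ (a : ι → k) (v : ι → V),
    Good (k := k) P v → Rel P e a v → W a v ≤ e + 1 → W a v = 0 := by
  induction e with
  | zero =>
    classical
    intro a v hg hr hw
    by_contra hne
    obtain ⟨i, -, hi⟩ := Finset.exists_ne_zero_of_sum_ne_zero hne
    have hothers : ∀ j, j ≠ i → wt a v j = 0 := by
      intro j hj
      have h1 : wt a v i + wt a v j ≤ W a v := by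
        have := Finset.sum_le_sum_of_subset (f := fun i => wt a v i) (Finset.subset_univ {i, j})
        rwa [Finset.sum_pair hj.symm] at this
      omega
    have hvi : v i = 0 := by
      by_contra hv
      have := wt_le_W a v i
      unfold wt at this
      rw [if_neg hv] at this
      omega
    have hai : a i ≠ 0 := by
      intro ha
      apply hi; unfold wt; simp [hvi, ha]
    have h2 : ∑ j, a j = a i := by
      apply Finset.sum_eq_single i
      · intro j _ hj
        have := hothers j hj
        unfold wt at this
        by_cases hv : v j = 0 <;> by_cases ha : a j = 0 <;> simp_all
      · simp
    exact hai (h2 ▸ hr)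
  | succ e ih =>
    intro a v hg hr hw
    by_contra hne
    obtain ⟨i, -, hi⟩ := Finset.exists_ne_zero_of_sum_ne_zero hne
    have hall : ∀ h : Dual k V, h (P i) = 0 → W (ra P h a v) (rv P h v) = 0 := by
      intro h hh
      apply ih _ _ (hg.res h) (hr h)
      have h1 := W_res P h a v
      have h2 := dg_le_D P (LinearMap.ker h) a v i
      have h3 : 1 ≤ dg P (LinearMap.ker h) a v i := by
        unfold dg wt at *
        have : P i ∈ LinearMap.ker h := hh
        rw [if_pos this]
        split_ifs at * <;> simp_all
      omega
    have hvi : v i = 0 := by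
      by_contra hv
      obtain ⟨f, hf, hU⟩ := Submodule.exists_le_ker_of_notMem (hg i hv)
      have h0 : f (P i) = 0 := hU (Submodule.mem_span_singleton_self _)
      have := (W_zero (hall f h0) i).2
      simp [ra, h0, hf] at this
    have hothers : ∀ j, j ≠ i → wt a v j = 0 := by
      intro j hj
      obtain ⟨f, hf, hU⟩ := Submodule.exists_le_ker_of_notMem (fun hm => hj (hP.2 i j hm))
      have h0 : f (P i) = 0 := hU (Submodule.mem_span_singleton_self _)
      have h1 := W_zero (hall f h0) j
      simp only [rv, ra, smul_eq_zero, hf, false_or] at h1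
      obtain ⟨hv, ha⟩ := h1
      rw [hv, map_zero, add_zero] at ha
      have ha' : a j = 0 := by
        rcases mul_eq_zero.mp ha with h | h
        · exact h
        · exact absurd h hf
      unfold wt
      simp [hv, ha']
    have hWi : W a v = wt a v i := by
      apply Finset.sum_eq_single i
      · intro j _ hj; exact hothers j hj
      · simp
    have h1le : wt a v i ≤ 1 := by
      unfold wt; rw [if_pos hvi]; split_ifs <;> simp
    obtain ⟨f, hf, -⟩ := Submodule.exists_le_ker_of_notMem (p := (⊥ : Submodule k V))
      (v := P i) (by simpa using hP.1 i)
    have h5 := W_res P f a v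
    have h6 := ih _ _ (hg.res f) (hr f) (by omega)
    have h7 := (W_zero h6 i).2
    simp only [ra, hvi, map_zero, add_zero, mul_eq_zero, hf, or_false] at h7
    apply hi
    unfold wt; simp [hvi, h7]

lemma exists_max_aux (p : ℕ → Prop) (B : ℕ) (hex : ∃ m, p m) (hB : ∀ m, p m → m ≤ B) :
    ∃ m, p m ∧ ∀ m', p m' → m' ≤ m := by
  classical
  obtain ⟨m, hm⟩ := hex
  exact ⟨Nat.findGreatest p B, Nat.findGreatest_spec (hB m hm) hm,
    fun m' hm' => Nat.le_findGreatest (hB m' hm') hm'⟩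


lemma finrank_enlarge [FiniteDimensional k V] (U : Submodule k V) (x : V) :
    finrank k (U ⊔ Submodule.span k {x} : Submodule k V) ≤ finrank k U + 1 := by
  have h1 := Submodule.finrank_add_le_finrank_add_finrank U (Submodule.span k {x})
  have h2 := finrank_span_le_card (R := k) ({x} : Set V)
  simp only [Set.toFinset_singleton, Finset.card_singleton] at h2
  omega

lemma exists_subspace [FiniteDimensional k V] (P : ι → V) (a : ι → k) (v : ι → V) (r : ℕ)
    (hr : r ≤ W a v) : ∃ U : Submodule k V, finrank k U ≤ r ∧ r ≤ D P U a v := by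
  induction r with
  | zero => exact ⟨⊥, by simp, Nat.zero_le _⟩
  | succ r ih =>
    obtain ⟨U, h1, h2⟩ := ih (by omega)
    by_cases h : r + 1 ≤ D P U a v
    · exact ⟨U, by omega, h⟩
    · obtain ⟨x, hx⟩ := enlarge (P := P) (U := U) (a := a) (v := v) (by omega)
      exact ⟨_, (finrank_enlarge U x).trans (by omega), by omega⟩

lemma lemmaA [FiniteDimensional k V] {P : ι → V} (hP : Dist k P) (e : ℕ) :
    ∀ (a : ι → k) (v : ι → V), Good (k := k) P v → Rel P e a v → W a v ≤ 2 * e + 1 →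
      ∃ L : Submodule k V, finrank k L ≤ 2 ∧ D P L a v = W a v := by
  induction e with
  | zero =>
    intro a v hg hr hw
    have := lemma0 hP 0 a v hg hr (by omega)
    have h2 := D_le_W P ⊥ a v
    exact ⟨⊥, by simp, by omega⟩
  | succ e ih =>
    intro a v hg hr hw
    by_cases hw1 : W a v ≤ 1
    · have := lemma0 hP (e+1) a v hg hr (by omega)
      have h2 := D_le_W P ⊥ a v
      exact ⟨⊥, by simp, by omega⟩
    obtain ⟨U0, hU0, hD0⟩ := exists_subspace P a v 2 (by omega)
    -- a line of maximal degree
    have hmax : ∃ L : Submodule k V, finrank k L ≤ 2 ∧ ∀ L' : Submodule k V, finrank k L' ≤ 2 →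
        D P L' a v ≤ D P L a v := by
      obtain ⟨m, ⟨L, hL, hm⟩, hmm⟩ := exists_max_aux
        (fun m => ∃ L : Submodule k V, finrank k L ≤ 2 ∧ D P L a v = m) (W a v)
        ⟨_, U0, hU0, rfl⟩ (by rintro _ ⟨L, -, rfl⟩; exact D_le_W P L a v)
      exact ⟨L, hL, fun L' hL' => by rw [hm]; exact hmm _ ⟨L', hL', rfl⟩⟩
    obtain ⟨L, hL, hLm⟩ := hmax
    have hL2 := hLm U0 hU0
    refine ⟨L, hL, ?_⟩
    by_contra hne
    have hlt := lt_of_le_of_ne (D_le_W P L a v) hne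
    obtain ⟨f, hf, hfW⟩ := separate hlt
    have h1 := W_res P f a v
    have h2 := D_mono P hf a v
    obtain ⟨L1, hL1, hD1⟩ := ih _ _ (hg.res f) (hr f) (by omega)
    have h3 : e + 2 ≤ W (ra P f a v) (rv P f v) := by
      by_contra hc
      have := lemma0 hP e _ _ (hg.res f) (hr f) (by omega)
      omega
    have h4 := D_res_le P f L1 a v
    have h5 := hLm L1 hL1
    have := lemma0 hP e _ _ (hg.res f) (hr f) (by omega)
    omega

lemma exists_form [FiniteDimensional k V] (hV : 4 ≤ finrank k V) (U : Submodule k V)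
    (hU : finrank k U ≤ 3) : ∃ f : Dual k V, f ≠ 0 ∧ U ≤ LinearMap.ker f := by
  apply Submodule.exists_le_ker_of_lt_top
  rw [lt_top_iff_ne_top]
  rintro rfl
  rw [finrank_top] at hU
  omega

lemma lemmaB [FiniteDimensional k V] (hV : 4 ≤ finrank k V) {P : ι → V} (hP : Dist k P) (e : ℕ) :
    ∀ (a : ι → k) (v : ι → V), Good (k := k) P v → Rel P e a v → W a v ≤ 3 * e + 1 →
      0 < W a v → ∃ h : Dual k V, h ≠ 0 ∧ e + 2 ≤ D P (LinearMap.ker h) a v := by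
  induction e with
  | zero =>
    intro a v hg hr hw hpos
    have := lemma0 hP 0 a v hg hr (by omega)
    omega
  | succ e ih =>
    intro a v hg hr hw hpos
    by_contra! hcon
    have hge : e + 3 ≤ W a v := by
      by_contra hc
      have := lemma0 hP (e+1) a v hg hr (by omega)
      omega
    obtain ⟨U0, hU0, hD0⟩ := exists_subspace P a v 3 (by omega)
    obtain ⟨f0, hf0, hUf0⟩ := exists_form hV U0 hU0
    have hD0' := D_mono P hUf0 a v
    obtain ⟨m, ⟨f, hf, hm⟩, hmm⟩ := exists_max_aux
        (fun m => ∃ f : Dual k V, f ≠ 0 ∧ D P (LinearMap.ker f) a v = m) (W a v)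
        ⟨_, f0, hf0, rfl⟩ (by rintro _ ⟨L, -, rfl⟩; exact D_le_W P _ a v)
    have hmax : ∀ f' : Dual k V, f' ≠ 0 → D P (LinearMap.ker f') a v ≤ D P (LinearMap.ker f) a v :=
      fun f' hf' => by rw [hm]; exact hmm _ ⟨f', hf', rfl⟩
    have h3 := hmax f0 hf0
    have hW := W_res P f a v
    have hc := hcon f hf
    have hg1 := hg.res f
    have hr1 := hr f
    obtain ⟨f2, hf2, hD2⟩ := ih _ _ hg1 hr1 (by omega) (by omega)
    have h4 := D_res_le P f (LinearMap.ker f2) a v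
    have h5 := hmax f2 hf2
    have hc2 := hcon f2 hf2
    rcases e with _ | e
    · have := lemma0 hP 0 _ _ hg1 hr1 (by omega)
      omega
    · have hW2 := W_res P f2 (ra P f a v) (rv P f v)
      have h6 := lemma0 hP e _ _ (hg1.res f2) (hr1 f2) (by omega)
      obtain ⟨L, hL, hLD⟩ := lemmaA hP (e+1) _ _ hg1 hr1 (by omega)
      have h7 := D_res_le P f L a v
      obtain ⟨x, hx⟩ : ∃ x : V, e + 4 ≤ D P (L ⊔ Submodule.span k {x}) a v := by
        by_cases hlt : D P L a v < W a v
        · obtain ⟨x, hx⟩ := enlarge hlt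
          exact ⟨x, by omega⟩
        · have h8 := D_mono P (le_sup_left : L ≤ L ⊔ Submodule.span k {(0 : V)}) a v
          exact ⟨0, by omega⟩
      have h9 := finrank_enlarge L x
      obtain ⟨f3, hf3, hU3⟩ := exists_form hV _ (h9.trans (by omega))
      have h10 := D_mono P hU3 a v
      have := hcon f3 hf3
      omega

open Classical in
/-- Indices of the points in `L`. -/
noncomputable def pts (P : ι → V) (L : Submodule k V) : Finset ι :=
  Finset.univ.filter fun i => P i ∈ L

lemma mem_pts {P : ι → V} {L : Submodule k V} {i : ι} : i ∈ pts P L ↔ P i ∈ L := by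
  simp [pts]

lemma dg_le_two (P : ι → V) (L : Submodule k V) (a : ι → k) (v : ι → V) (i : ι) :
    dg P L a v i ≤ 2 := by
  unfold dg; split_ifs <;> simp

lemma D_eq_pts (P : ι → V) (L : Submodule k V) (a : ι → k) (v : ι → V) :
    D P L a v = ∑ i ∈ pts P L, dg P L a v i := by
  symm
  apply Finset.sum_subset (Finset.subset_univ _)
  intro i _ hi
  rw [mem_pts] at hi
  unfold dg; simp [hi]

lemma D_le_pts (P : ι → V) (L : Submodule k V) (a : ι → k) (v : ι → V) :
    D P L a v ≤ 2 * (pts P L).card := by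
  rw [D_eq_pts]
  have := Finset.sum_le_card_nsmul (pts P L) (fun i => dg P L a v i) 2
    (fun i _ => dg_le_two P L a v i)
  simpa [mul_comm] using this

lemma D_pts_eq {P : ι → V} {L : Submodule k V} {a : ι → k} {v : ι → V}
    (h : 2 * (pts P L).card ≤ D P L a v) {i : ι} (hi : P i ∈ L) : v i ≠ 0 ∧ v i ∈ L := by
  have h2 : dg P L a v i = 2 := by
    by_contra hne
    have hlt : dg P L a v i < 2 := lt_of_le_of_ne (dg_le_two P L a v i) hne
    have := Finset.sum_lt_sum (s := pts P L) (f := fun i => dg P L a v i) (g := fun _ => 2)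
      (fun i _ => dg_le_two P L a v i) ⟨i, mem_pts.mpr hi, hlt⟩
    rw [← D_eq_pts] at this
    simp at this
    omega
  unfold dg at h2
  constructor
  · intro h0
    simp only [h0, hi, if_true] at h2
    split_ifs at h2; simp at h2
  · by_contra h0
    simp only [h0, hi, if_true, if_false] at h2
    split_ifs at h2 <;> simp at h2

lemma lemmaQ [FiniteDimensional k V] {P : ι → V} (hP : Dist k P) (e : ℕ)
    (a : ι → k) (v : ι → V) (hg : Good (k := k) P v) (hr : Rel P (e + 1) a v)
    (hcount : ∀ L : Submodule k V, finrank k L ≤ 2 → 2 * (pts P L).card ≤ e + 2)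
    (h : Dual k V) (hpos : 0 < W (ra P h a v) (rv P h v))
    (hle : W (ra P h a v) (rv P h v) ≤ 2 * e + 1) :
    ∃ L : Submodule k V, finrank k L ≤ 2 ∧ 2 * (pts P L).card = e + 2 ∧ D P L a v = e + 2 ∧
      (∀ i, P i ∈ L → v i ≠ 0 ∧ v i ∈ L ∧ h (P i) ≠ 0) ∧
      ∀ i, v i ≠ 0 → h (P i) ≠ 0 → P i ∈ L := by
  obtain ⟨L, hL, hD⟩ := lemmaA hP e _ _ (hg.res h) (hr h) hle
  have h1 : e + 2 ≤ W (ra P h a v) (rv P h v) := by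
    by_contra hc
    have := lemma0 hP e _ _ (hg.res h) (hr h) (by omega)
    omega
  have h2 := hcount L hL
  have h3 := D_le_pts P L a v
  have h4 := D_res_le P h L a v
  refine ⟨L, hL, by omega, by omega, ?_, ?_⟩
  · intro i hi
    have h5 := D_pts_eq (a := a) (v := v) (by omega) hi
    have h6 := D_pts_eq (a := ra P h a v) (v := rv P h v) (by omega) hi
    refine ⟨h5.1, h5.2, fun h0 => h6.1 ?_⟩
    simp [rv, h0]
  · intro i hv hi
    by_contra hout
    have : dg P L (ra P h a v) (rv P h v) i < wt (ra P h a v) (rv P h v) i := by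
      unfold dg wt rv
      simp [hout, hi, hv]
    have := Finset.sum_lt_sum (s := Finset.univ) (fun j _ => dg_le_wt P L (ra P h a v) (rv P h v) j)
      ⟨i, Finset.mem_univ _, this⟩
    unfold D W at hD
    omega

/-- Two distinct points span a line. -/
lemma line_le [FiniteDimensional k V] {P : ι → V} (hP : Dist k P) {L M : Submodule k V}
    (hL : finrank k L ≤ 2) {i j : ι} (hij : j ≠ i) (hi : P i ∈ L) (hj : P j ∈ L)
    (hi' : P i ∈ M) (hj' : P j ∈ M) : L ≤ M := by
  have hli : LinearIndependent k ![P i, P j] := by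
    rw [LinearIndependent.pair_iff' (hP.1 i)]
    intro c hc
    exact hij (hP.2 i j (Submodule.mem_span_singleton.mpr ⟨c, hc⟩))
  have h1 := finrank_span_eq_card hli
  have hle : Submodule.span k (Set.range ![P i, P j]) ≤ L := by
    rw [Submodule.span_le]
    rintro _ ⟨t, rfl⟩
    fin_cases t <;> simp [hi, hj]
  have heq := Submodule.eq_of_le_of_finrank_le hle (by rw [h1]; simpa using hL)
  rw [← heq, Submodule.span_le]
  rintro _ ⟨t, rfl⟩
  fin_cases t <;> simp [hi', hj']

lemma lemmaM [FiniteDimensional k V] (hV : 4 ≤ finrank k V) {P : ι → V} (hP : Dist k P) (d : ℕ)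
    (hd : 4 ≤ d) (a : ι → k) (v : ι → V) (hg : Good (k := k) P v) (hr : Rel P d a v)
    (hW : W a v ≤ 3 * d + 1)
    (hns : ∀ h : Dual k V, h ≠ 0 → 0 < W (ra P h a v) (rv P h v))
    (hcount : ∀ L : Submodule k V, finrank k L ≤ 2 → 2 * (pts P L).card ≤ d + 1) : False := by
  classical
  obtain ⟨e, rfl⟩ : ∃ e, d = e + 1 := ⟨d - 1, by omega⟩
  have hQ := lemmaQ hP e a v hg hr hcount
  have hWpos : 0 < W a v := by
    obtain ⟨f, hf, -⟩ := exists_form hV (⊥ : Submodule k V) (by simp)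
    have := hns f hf
    have := W_res P f a v
    omega
  obtain ⟨f1, hf1, hD1⟩ := lemmaB hV hP (e+1) a v hg hr hW hWpos
  have hW1 := W_res P f1 a v
  obtain ⟨L, hL, hLc, hLD, hLp, -⟩ := hQ f1 (hns f1 hf1) (by omega)
  -- a plane through L and more
  have hlt : D P L a v < W a v := by
    obtain ⟨f, hf, hLf⟩ := exists_form hV L (by omega)
    have := hns f hf
    have := W_res P f a v
    have := D_mono P hLf a v
    omega
  obtain ⟨x, hx⟩ := enlarge hlt
  obtain ⟨f2, hf2, hU2⟩ := exists_form hV _ ((finrank_enlarge L x).trans (by omega))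
  have hD2 := D_mono P hU2 a v
  have hW2 := W_res P f2 a v
  have hL2 : L ≤ LinearMap.ker f2 := le_sup_left.trans hU2
  obtain ⟨L', hL', hLc', hLD', hLp', -⟩ := hQ f2 (hns f2 hf2) (by omega)
  have hdisj : ∀ i, P i ∈ L → P i ∉ L' := fun i hi hi' => (hLp' i hi').2.2 (hL2 hi)
  -- three points on L
  have hcard : 2 < (pts P L).card := by omega
  obtain ⟨i0, i1, i2, hi0, hi1, hi2, h01, h02, h12⟩ := Finset.two_lt_card_iff.mp hcard
  rw [mem_pts] at hi0 hi1 hi2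
  obtain ⟨f3, hf3, hU3⟩ := exists_form hV _ ((finrank_enlarge L' (P i0)).trans (by omega))
  have hL3 : L' ≤ LinearMap.ker f3 := le_sup_left.trans hU3
  have h30 : f3 (P i0) = 0 :=
    hU3 ((le_sup_right : _ ≤ L' ⊔ Submodule.span k {P i0}) (Submodule.mem_span_singleton_self _))
  have hD3 : e + 3 ≤ D P (LinearMap.ker f3) a v := by
    have : dg P L' a v i0 < dg P (LinearMap.ker f3) a v i0 := by
      have h1 := hdisj i0 hi0
      have h2 := (hLp i0 hi0).1
      have h3 : P i0 ∈ LinearMap.ker f3 := h30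
      unfold dg
      rw [if_neg h1, if_pos h3, if_neg h2]
      split_ifs <;> simp
    have := Finset.sum_lt_sum (s := Finset.univ) (fun j _ => dg_mono P hL3 a v j)
      ⟨i0, Finset.mem_univ _, this⟩
    unfold D at *
    omega
  have hW3 := W_res P f3 a v
  obtain ⟨M, hM, hMc, hMD, hMp, hMall⟩ := hQ f3 (hns f3 hf3) (by omega)
  by_cases hLf3 : L ≤ LinearMap.ker f3
  · -- three disjoint lines with too much degree
    have d1 : Disjoint (pts P L) (pts P L') := by
      rw [Finset.disjoint_left]; intro i hi hi'
      exact hdisj i (mem_pts.mp hi) (mem_pts.mp hi')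
    have d2 : Disjoint (pts P L ∪ pts P L') (pts P M) := by
      rw [Finset.disjoint_left]; intro i hi hi'
      have := (hMp i (mem_pts.mp hi')).2.2
      rcases Finset.mem_union.mp hi with h | h
      · exact this (hLf3 (mem_pts.mp h))
      · exact this (hL3 (mem_pts.mp h))
    have hsum : 2 * (pts P L ∪ pts P L' ∪ pts P M).card ≤ W a v := by
      have h1 : ∀ i ∈ pts P L ∪ pts P L' ∪ pts P M, 2 ≤ wt a v i := by
        intro i hi
        have : v i ≠ 0 := by
          simp only [Finset.mem_union, mem_pts] at hi
          rcases hi with (h | h) | h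
          · exact (hLp i h).1
          · exact (hLp' i h).1
          · exact (hMp i h).1
        unfold wt; rw [if_neg this]
      have h2 := Finset.card_nsmul_le_sum _ _ 2 h1
      have h3 := Finset.sum_le_sum_of_subset (f := fun i => wt a v i)
        (Finset.subset_univ (pts P L ∪ pts P L' ∪ pts P M))
      have h4 := h2.trans h3
      rw [mul_comm]
      exact h4
    rw [Finset.card_union_of_disjoint d2, Finset.card_union_of_disjoint d1] at hsum
    omega
  · have hk : ∀ j, j ≠ i0 → P j ∈ L → f3 (P j) ≠ 0 := fun j hj hjL h0 =>
      hLf3 (line_le hP hL hj hi0 hjL h30 h0)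
    have m1 : P i1 ∈ M := hMall i1 (hLp i1 hi1).1 (hk i1 h01.symm hi1)
    have m2 : P i2 ∈ M := hMall i2 (hLp i2 hi2).1 (hk i2 h02.symm hi2)
    have hLM : L ≤ M := line_le hP hL h12.symm hi1 hi2 m1 m2
    exact (hMp i0 (hLM hi0)).2.2 h30

end
end TerrAux

namespace TerrAux
section poly
open MvPolynomial Module
variable {k : Type*} [Field k]

lemma finrank_hom (k : Type*) [Field k] (n d : ℕ) :
    finrank k (homogeneousSubmodule (Fin (n+1)) k d) = (n + d).choose n := by
  classical
  have h1 : homogeneousSubmodule (Fin (n+1)) k d =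
      restrictSupport k ((Finset.univ.finsuppAntidiag d : Finset (Fin (n+1) →₀ ℕ)) :
        Set (Fin (n+1) →₀ ℕ)) := by
    rw [homogeneousSubmodule_eq_finsupp_supported]
    unfold restrictSupport
    congr 1
    ext s
    simp [Finset.mem_finsuppAntidiag, Finsupp.degree_eq_sum]
  rw [h1, finrank_eq_card_basis (basisRestrictSupport k _)]
  simp only [Finset.coe_sort_coe, Fintype.card_coe]
  rw [Finset.card_finsuppAntidiag_nat_eq_choose]
  simp only [Finset.card_univ, Fintype.card_fin]
  rw [show n + 1 + d - 1 = n + d by omega, Nat.choose_symm_add]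

instance finite_hom (n d : ℕ) : FiniteDimensional k (homogeneousSubmodule (Fin n) k d) :=
  Module.Finite.iff_fg.mpr (homogeneousSubmodule_fg (Fin n) k d)

/-- All gradients at a family of points. -/
noncomputable def gradMap {m : ℕ} {ι : Type*} (P : ι → Fin m → k) (d : ℕ) :
    homogeneousSubmodule (Fin m) k d →ₗ[k] (ι → Fin m → k) :=
  LinearMap.pi fun i => LinearMap.pi fun j =>
    (evalLM k (P i)) ∘ₗ (pderiv j).toLinearMap ∘ₗ Submodule.subtype _

lemma gradMap_apply {m : ℕ} {ι : Type*} (P : ι → Fin m → k) (d : ℕ)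
    (f : homogeneousSubmodule (Fin m) k d) (i : ι) (j : Fin m) :
    gradMap P d f i j = eval (P i) (pderiv j (f : MvPolynomial (Fin m) k)) := by
  simp [gradMap, evalLM, aeval_eq_eval]

lemma euler {m d : ℕ} {f : MvPolynomial (Fin m) k} (hf : f.IsHomogeneous d) (x : Fin m → k) :
    ∑ j, x j * eval x (pderiv j f) = d * eval x f := by
  have := congrArg (eval x) hf.sum_X_mul_pderiv
  simpa using this

lemma h0_eq [CharZero k] (n d : ℕ) (hd : d ≠ 0) (S : Finset (ProjSpace k n)) :
    h0 k n d S = finrank k (LinearMap.ker (gradMap (fun p : S => p.1.rep) d)) := by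
  unfold h0
  rw [← Submodule.finrank_map_subtype_eq]
  have : homogeneousSubmodule (Fin (n+1)) k d ⊓ ⨅ p ∈ S, doubleVanishing k p.rep =
    Submodule.map (homogeneousSubmodule (Fin (n+1)) k d).subtype
      (LinearMap.ker (gradMap (fun p : S => p.1.rep) d)) := by
    ext f
    simp only [Submodule.mem_inf, Submodule.mem_iInf, doubleVanishing, LinearMap.mem_ker,
      Submodule.mem_map, Submodule.subtype_apply, LinearMap.comp_apply]
    constructor
    · rintro ⟨hf, h⟩
      refine ⟨⟨f, hf⟩, ?_, rfl⟩
      ext p j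
      rw [gradMap_apply]
      simpa [evalLM, aeval_eq_eval] using (h p.1 p.2).2 j
    · rintro ⟨g, hg, rfl⟩
      have hg' : ∀ p ∈ S, ∀ j, eval p.rep (pderiv j (g : MvPolynomial (Fin (n+1)) k)) = 0 := by
        intro p hp j
        have := congrFun (congrFun hg ⟨p, hp⟩) j
        rwa [gradMap_apply] at this
      refine ⟨g.2, fun p hp => ⟨?_, fun j => ?_⟩⟩
      · have h1 := euler g.2 p.rep
        simp only [hg' p hp, mul_zero, Finset.sum_const_zero] at h1
        have h2 : (d : k) ≠ 0 := Nat.cast_ne_zero.mpr hd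
        have h3 := (mul_eq_zero.mp h1.symm).resolve_left h2
        simpa [evalLM, aeval_eq_eval] using h3
      · simpa [evalLM, aeval_eq_eval] using hg' p hp j
  rw [this]

lemma h1_eq [CharZero k] (n d : ℕ) (hd : d ≠ 0) (S : Finset (ProjSpace k n)) :
    h1 k n d S = (n + 1) * S.card -
      (finrank k (LinearMap.range (gradMap (fun p : S => p.1.rep) d)) : ℤ) := by
  unfold h1
  rw [h0_eq n d hd]
  have h1 := LinearMap.finrank_range_add_finrank_ker (gradMap (fun p : S => p.1.rep) d)
  rw [finrank_hom] at h1
  rw [← h1]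
  push_cast
  ring

lemma finrank_target (n : ℕ) (S : Finset (ProjSpace k n)) :
    finrank k (S → Fin (n+1) → k) = (n + 1) * S.card := by
  rw [finrank_pi_fintype]
  simp [mul_comm]

lemma surj_of_h1 [CharZero k] {n d : ℕ} (hd : d ≠ 0) {S : Finset (ProjSpace k n)}
    (h : h1 k n d S = 0) : Function.Surjective (gradMap (fun p : S => p.1.rep) d) := by
  rw [h1_eq n d hd] at h
  rw [← LinearMap.range_eq_top]
  apply Submodule.eq_top_of_finrank_eq
  rw [finrank_target]
  zify
  linarith

lemma functional_of_h1 [CharZero k] {n d : ℕ} (hd : d ≠ 0) {S : Finset (ProjSpace k n)}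
    (h : 0 < h1 k n d S) : ∃ c : S → Fin (n+1) → k, c ≠ 0 ∧
      ∀ f : MvPolynomial (Fin (n+1)) k, f.IsHomogeneous d →
        ∑ p : S, ∑ j, c p j * eval p.1.rep (pderiv j f) = 0 := by
  classical
  rw [h1_eq n d hd] at h
  have hlt : LinearMap.range (gradMap (fun p : S => p.1.rep) d) < ⊤ := by
    rw [lt_top_iff_ne_top]
    intro htop
    rw [htop, finrank_top, finrank_target] at h
    push_cast at h
    linarith
  obtain ⟨g, hg, hker⟩ := Submodule.exists_le_ker_of_lt_top _ hlt
  have hexp : ∀ y : S → Fin (n+1) → k,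
      g y = ∑ p : S, ∑ j, g (Pi.single p (Pi.single j 1)) * y p j := by
    intro y
    have hy : y = ∑ p : S, ∑ j, y p j • (Pi.single p (Pi.single j (1:k)) : S → Fin (n+1) → k) := by
      ext q l
      simp only [Finset.sum_apply, Pi.smul_apply]
      rw [Finset.sum_eq_single q, Finset.sum_eq_single l]
      · simp
      · intro b _ hb; simp [Pi.single_eq_of_ne hb.symm]
      · simp
      · intro b _ hb; simp [Pi.single_eq_of_ne hb.symm]
      · simp
    conv_lhs => rw [hy]
    simp only [map_sum, map_smul, smul_eq_mul]
    exact Finset.sum_congr rfl fun p _ => Finset.sum_congr rfl fun j _ => mul_comm _ _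
  refine ⟨fun p j => g (Pi.single p (Pi.single j 1)), ?_, ?_⟩
  · intro h0
    apply hg
    refine LinearMap.ext fun y => ?_
    rw [hexp]
    have : ∀ p j, g (Pi.single p (Pi.single j 1)) = 0 := fun p j => congrFun (congrFun h0 p) j
    simp [this]
  · intro f hf
    have h1 : g (gradMap (fun p : S => p.1.rep) d ⟨f, hf⟩) = 0 := hker ⟨_, rfl⟩
    rw [hexp] at h1
    simpa only [gradMap_apply] using h1

lemma functional_full [CharZero k] {n d : ℕ} (hd : d ≠ 0) {S : Finset (ProjSpace k n)}
    (hmin : ∀ A : Finset (ProjSpace k n), A ⊂ S → h1 k n d A = 0)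
    {c : S → Fin (n+1) → k} (hc : c ≠ 0)
    (hrel : ∀ f : MvPolynomial (Fin (n+1)) k, f.IsHomogeneous d →
        ∑ p : S, ∑ j, c p j * eval p.1.rep (pderiv j f) = 0) (p : S) : c p ≠ 0 := by
  classical
  intro h0
  have hs := surj_of_h1 hd (hmin (S.erase p.1) (Finset.erase_ssubset p.2))
  apply hc
  ext q l
  by_cases hq : q = p
  · rw [hq, h0]; rfl
  have hqm : q.1 ∈ S.erase p.1 := Finset.mem_erase.mpr ⟨fun h => hq (Subtype.ext h), q.2⟩
  obtain ⟨f, hf⟩ := hs (Pi.single ⟨q.1, hqm⟩ (Pi.single l 1))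
  have hval : ∀ r : S, r ≠ p → ∀ j, eval r.1.rep (pderiv j (f : MvPolynomial (Fin (n+1)) k)) =
      (if r = q ∧ j = l then 1 else 0) := by
    intro r hr j
    have hrm : r.1 ∈ S.erase p.1 := Finset.mem_erase.mpr ⟨fun h => hr (Subtype.ext h), r.2⟩
    have := congrFun (congrFun hf ⟨r.1, hrm⟩) j
    rw [gradMap_apply] at this
    rw [this]
    by_cases hrq : r = q
    · subst hrq
      by_cases hjl : j = l
      · subst hjl; simp
      · simp [hjl]
    · have hne : (⟨r.1, hrm⟩ : {x // x ∈ S.erase p.1}) ≠ ⟨q.1, hqm⟩ :=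
        fun h => hrq (Subtype.ext (congrArg (fun z => z.1) h))
      simp [hrq, Pi.single_eq_of_ne hne]
  have h1 := hrel f f.2
  rw [Finset.sum_eq_single q, Finset.sum_eq_single l] at h1
  · rw [hval q hq] at h1
    simpa using h1
  · intro j _ hj
    rw [hval q hq]; simp [hj]
  · simp
  · intro r _ hr
    by_cases hrp : r = p
    · subst hrp; simp [h0]
    · apply Finset.sum_eq_zero
      intro j _
      rw [hval r hrp]; simp [hr]
  · simp

lemma rel_of_poly {m : ℕ} {ι : Type*} [Fintype ι] (P : ι → Fin m → k) (e : ℕ) :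
    ∀ (a : ι → k) (v : ι → Fin m → k),
    (∀ f : MvPolynomial (Fin m) k, f.IsHomogeneous e →
      ∑ i, (a i * eval (P i) f + ∑ j, v i j * eval (P i) (pderiv j f)) = 0) → Rel P e a v := by
  classical
  induction e with
  | zero =>
    intro a v h
    have := h 1 (isHomogeneous_one _ _)
    simpa [Rel] using this
  | succ e ih =>
    intro a v h f
    apply ih
    intro g hg
    have hlin : ∀ x : Fin m → k, f x = ∑ j, f (Pi.single j 1) * x j := by
      intro x
      conv_lhs => rw [← Finset.univ_sum_single x]
      rw [map_sum]
      refine Finset.sum_congr rfl fun j _ => ?_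
      rw [mul_comm, ← smul_eq_mul, ← map_smul, ← Pi.single_smul, smul_eq_mul, mul_one]
    set l : MvPolynomial (Fin m) k := ∑ j, C (f (Pi.single j 1)) * X j with hl
    have hlh : l.IsHomogeneous 1 :=
      IsHomogeneous.sum _ _ _ fun j _ => isHomogeneous_C_mul_X _ _
    have hle : ∀ x, eval x l = f x := by
      intro x; rw [hlin x, hl]; simp
    have hld : ∀ j, pderiv j l = C (f (Pi.single j 1)) := by
      intro j
      rw [hl, map_sum, Finset.sum_eq_single j]
      · simp
      · intro b _ hb; simp [pderiv_X_of_ne hb]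
      · simp
    have h1 := h (l * g) (by rw [add_comm]; exact hlh.mul hg)
    rw [← h1]
    refine Finset.sum_congr rfl fun i _ => ?_
    simp only [ra, rv, Derivation.leibniz, smul_eq_mul, map_mul, map_add, hle, hld, eval_C,
      Pi.smul_apply]
    rw [hlin (v i)]
    simp only [mul_add, Finset.sum_add_distrib, add_mul, Finset.sum_mul]
    have e1 : ∑ x, f (P i) * v i x * eval (P i) (pderiv x g) =
      ∑ x, v i x * (f (P i) * eval (P i) (pderiv x g)) :=
        Finset.sum_congr rfl fun x _ => by ring
    have e2 : ∑ x, f (Pi.single x 1) * v i x * eval (P i) g =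
      ∑ x, v i x * (eval (P i) g * f (Pi.single x 1)) :=
        Finset.sum_congr rfl fun x _ => by ring
    rw [e1, e2]
    ring

/-- Chain rule for a linear substitution. -/
lemma chain {m r : ℕ} (u : Fin r → Fin m → k) (f : MvPolynomial (Fin m) k) (q : Fin r → k)
    (x : Fin m → k) (hx : ∀ j, x j = ∑ l, q l * u l j) (l : Fin r) :
    eval q (pderiv l (aeval (fun j => ∑ t, C (u t j) * (X t : MvPolynomial (Fin r) k)) f)) =
      ∑ j, u l j * eval x (pderiv j f) := by
  classical
  have hev : ∀ g : MvPolynomial (Fin m) k,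
      eval q (aeval (fun j => ∑ t, C (u t j) * (X t : MvPolynomial (Fin r) k)) g) = eval x g := by
    intro g
    induction g using MvPolynomial.induction_on with
    | C c => simp
    | add g1 g2 h1 h2 => simp only [map_add, h1, h2]
    | mul_X g i h =>
      simp only [map_mul, h, aeval_X, map_sum, eval_C, eval_X, hx i]
      congr 1
      exact Finset.sum_congr rfl fun t _ => mul_comm _ _
  induction f using MvPolynomial.induction_on with
  | C c => simp
  | add g1 g2 h1 h2 => simp only [map_add, h1, h2, mul_add, Finset.sum_add_distrib]
  | mul_X g i h =>
    have hd : pderiv l (∑ t, C (u t i) * (X t : MvPolynomial (Fin r) k)) = C (u l i) := by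
      rw [map_sum, Finset.sum_eq_single l]
      · simp
      · intro b _ hb; simp [pderiv_X_of_ne hb]
      · simp
    have hX : eval q (∑ t, C (u t i) * (X t : MvPolynomial (Fin r) k)) = x i := by
      rw [hx i]; simp [mul_comm]
    simp only [map_mul, aeval_X, Derivation.leibniz, smul_eq_mul, map_add, hd, hX, h, hev, eval_C,
      eval_X, mul_add, Finset.sum_add_distrib]
    congr 1
    · rw [Finset.sum_eq_single i]
      · simp [mul_comm]
      · intro b _ hb; simp [pderiv_X_of_ne hb.symm]
      · simp
    · rw [Finset.mul_sum]
      exact Finset.sum_congr rfl fun j _ => by ring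

lemma line_bound {m : ℕ} {ι : Type*} [Fintype ι] (P : ι → Fin m → k) (d : ℕ)
    (hs : Function.Surjective (gradMap P d)) (u0 u1 : Fin m → k)
    (h01 : u0 ∉ Submodule.span k {u1}) (h10 : u1 ∉ Submodule.span k {u0})
    (hP : ∀ i, P i ∈ Submodule.span k (Set.range ![u0, u1])) : 2 * Fintype.card ι ≤ d + 1 := by
  classical
  have hq : ∀ i, ∃ q : Fin 2 → k, ∑ l, q l • ![u0, u1] l = P i := fun i =>
    (Submodule.mem_span_range_iff_exists_fun k).mp (hP i)
  choose q hq using hq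
  have hsurj : Function.Surjective (gradMap q d) := by
    intro z
    obtain ⟨f0, hf0, hk0⟩ := Submodule.exists_le_ker_of_notMem h01
    obtain ⟨f1, hf1, hk1⟩ := Submodule.exists_le_ker_of_notMem h10
    have hk0' : f0 u1 = 0 := hk0 (Submodule.mem_span_singleton_self _)
    have hk1' : f1 u0 = 0 := hk1 (Submodule.mem_span_singleton_self _)
    have hlin : ∀ (f : (Fin m → k) →ₗ[k] k) (x : Fin m → k), ∑ j, x j * f (Pi.single j 1) = f x := by
      intro f x
      conv_rhs => rw [← Finset.univ_sum_single x]
      rw [map_sum]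
      refine Finset.sum_congr rfl fun j _ => ?_
      rw [← smul_eq_mul, ← map_smul, ← Pi.single_smul, smul_eq_mul, mul_one]
    obtain ⟨f, hf⟩ := hs fun i j =>
      ((z i 0 / f0 u0) • f0 + (z i 1 / f1 u1) • f1) (Pi.single j 1)
    refine ⟨⟨aeval (fun j => ∑ t, C (![u0, u1] t j) * (X t : MvPolynomial (Fin 2) k))
      (f : MvPolynomial (Fin m) k), ?_⟩, ?_⟩
    · have := f.2.aeval (S := k) (n := 1)
        (fun j => ∑ t, C (![u0, u1] t j) * (X t : MvPolynomial (Fin 2) k))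
        (fun j => IsHomogeneous.sum _ _ _ fun t _ => isHomogeneous_C_mul_X _ _)
      simpa using this
    · ext i l
      rw [gradMap_apply]
      rw [chain ![u0, u1] _ (q i) (P i) (fun j => by rw [← hq i]; simp)]
      have h2 : ∀ j, eval (P i) (pderiv j (f : MvPolynomial (Fin m) k)) =
          ((z i 0 / f0 u0) • f0 + (z i 1 / f1 u1) • f1) (Pi.single j 1) := by
        intro j
        rw [← gradMap_apply, hf]
      simp only [h2]
      rw [hlin]
      fin_cases l
      · simp [hk1', div_mul_cancel₀ _ hf0]
      · simp [hk0', div_mul_cancel₀ _ hf1]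
  have h1 := LinearMap.finrank_le_finrank_of_surjective (f := gradMap q d) hsurj
  rw [finrank_hom k 1 d, finrank_pi_fintype] at h1
  simp at h1
  omega

end poly
end TerrAux

/-- Theorem: for `d ≥ 4` and `2x ≤ 3d + 1`, `T(3,d;x)' = ∅`. -/
theorem minTerracini_P3_empty_small_x
    (k : Type*) [Field k] [IsAlgClosed k] [CharZero k]
    (d x : ℕ) (hd : 4 ≤ d) (hx : 2 * x ≤ 3 * d + 1) :
    minTerracini k 3 d x = ∅ := by
  classical
  rw [Set.eq_empty_iff_forall_notMem]
  rintro S ⟨⟨hcard, hspan, -, h1pos⟩, hmin⟩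
  have hd0 : d ≠ 0 := by omega
  obtain ⟨c, hc, hrel⟩ := TerrAux.functional_of_h1 hd0 h1pos
  have hfull := TerrAux.functional_full hd0 hmin hc hrel
  have hV : Module.finrank k (Fin (3+1) → k) = 4 := by simp
  let P : S → Fin (3+1) → k := fun p => p.1.rep
  have hP : TerrAux.Dist k P := by
    refine ⟨fun p => p.1.rep_nonzero, fun i j hij => ?_⟩
    obtain ⟨t, ht⟩ := Submodule.mem_span_singleton.mp hij
    apply Subtype.ext
    rw [← j.1.mk_rep, ← i.1.mk_rep, Projectivization.mk_eq_mk_iff']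
    exact ⟨t, ht⟩
  -- normalised coefficients
  have hex : ∀ p : S, ∃ (a : k) (v : Fin (3+1) → k), (v ≠ 0 → v ∉ Submodule.span k {P p}) ∧
      (v = 0 → a ≠ 0) ∧ ∀ f : MvPolynomial (Fin (3+1)) k, f.IsHomogeneous d →
        a * eval (P p) f + ∑ j, v j * eval (P p) (pderiv j f) =
          ∑ j, c p j * eval (P p) (pderiv j f) := by
    intro p
    by_cases hm : c p ∈ Submodule.span k {P p}
    · obtain ⟨t, ht⟩ := Submodule.mem_span_singleton.mp hm
      refine ⟨t * d, 0, fun h => absurd rfl h, fun _ => ?_, fun f hf => ?_⟩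
      · apply mul_ne_zero
        · rintro rfl
          exact hfull p (by rw [← ht, zero_smul])
        · exact Nat.cast_ne_zero.mpr hd0
      · rw [← ht, mul_assoc, ← TerrAux.euler hf, Finset.mul_sum]
        simp [mul_assoc]
    · exact ⟨0, c p, fun _ => hm, fun h => absurd h (hfull p), fun f hf => by simp⟩
  choose a v hgood hne heq using hex
  have hR : TerrAux.Rel P d a v := by
    apply TerrAux.rel_of_poly
    intro f hf
    rw [← hrel f hf]
    exact Finset.sum_congr rfl fun p _ => heq p f hf
  refine TerrAux.lemmaM (by omega) hP d hd a v hgood hR ?_ ?_ ?_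
  · have : TerrAux.W a v ≤ (Finset.univ : Finset S).card • 2 := by
      apply Finset.sum_le_card_nsmul
      intro i _
      unfold TerrAux.wt; split_ifs <;> simp
    simp only [Finset.card_univ, Fintype.card_coe, smul_eq_mul, hcard] at this
    omega
  · intro h hh
    have : ∃ p : S, h (P p) ≠ 0 := by
      by_contra! hall
      apply hh
      have hle : (⊤ : Submodule k (Fin (3+1) → k)) ≤ LinearMap.ker h := by
        rw [← hspan, Submodule.span_le]
        rintro _ ⟨p, hp, rfl⟩
        exact hall ⟨p, hp⟩
      refine LinearMap.ext fun y => ?_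
      exact hle (Submodule.mem_top : y ∈ ⊤)
    obtain ⟨p, hp⟩ := this
    refine lt_of_lt_of_le ?_ (TerrAux.wt_le_W _ _ p)
    unfold TerrAux.wt TerrAux.ra TerrAux.rv
    by_cases hv : v p = 0
    · simp [hv, hne p hv, hp]
    · simp [hv, hp]
  · intro L hL
    by_contra hcon
    have hc2 : 1 < (TerrAux.pts P L).card := by omega
    obtain ⟨i, hi, j, hj, hij⟩ := Finset.one_lt_card.mp hc2
    rw [TerrAux.mem_pts] at hi hj
    let A : Finset (ProjSpace k 3) := S.filter fun p => p.rep ∈ L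
    have hAS : A ⊂ S := by
      refine Finset.ssubset_iff_subset_ne.mpr ⟨Finset.filter_subset _ _, fun hA => ?_⟩
      have hle : (⊤ : Submodule k (Fin (3+1) → k)) ≤ L := by
        rw [← hspan, Submodule.span_le]
        rintro _ ⟨p, hp, rfl⟩
        have hp' : p ∈ A := by rw [hA]; exact hp
        exact (Finset.mem_filter.mp hp').2
      have := Submodule.finrank_mono hle
      rw [finrank_top] at this
      omega
    have hcA : (TerrAux.pts P L).card = A.card := by
      rw [← Finset.card_map (Function.Embedding.subtype fun x => x ∈ S)]
      congr 1
      ext p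
      simp only [Finset.mem_map, TerrAux.mem_pts, Function.Embedding.coe_subtype, A,
        Finset.mem_filter]
      constructor
      · rintro ⟨q, hq, rfl⟩
        exact ⟨q.2, hq⟩
      · rintro ⟨hp, hL⟩
        exact ⟨⟨p, hp⟩, hL, rfl⟩
    have hs := TerrAux.surj_of_h1 hd0 (hmin A hAS)
    have hLle : L ≤ Submodule.span k (Set.range ![P i, P j]) :=
      TerrAux.line_le hP hL hij.symm hi hj (Submodule.subset_span ⟨0, rfl⟩)
        (Submodule.subset_span ⟨1, rfl⟩)
    have hb := TerrAux.line_bound (fun p : A => p.1.rep) d hs (P i) (P j)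
      (fun h => hij (hP.2 j i h)) (fun h => hij (hP.2 i j h).symm)
      (fun p => hLle (Finset.mem_filter.mp p.2).2)
    rw [Fintype.card_coe] at hb
    omega
end
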